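/- arXiv:0708.1922 — 2 statements merged into one kernel-verified Lean document; each statement's English description precedes it below -/
import Mathlib

section
/- For any initial data A_0, B_0, C_0 > 0 with B_0 > C_0, there exists a finite time T_0 > 0 such that the SL(2,ℝ) negative cross curvature flow ODE system has a positive solution on [0, T_0), which is maximal; moreover, as t → T_0^-, C(t)/(8 sqrt(T_0 - t)) → 1 and there exists a positive constant E such that A(t) sqrt(T_0 - t)/E → 1 and B(t) sqrt(T_0 - t)/E → 1. -/
/-- `F1 = -3A² + B² + C² - 2BC - 2AC - 2AB` for the `SL(2,ℝ)` cross curvature tensor. -/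
def sl2F1 (A B C : ℝ) : ℝ :=
  -3 * A ^ 2 + B ^ 2 + C ^ 2 - 2 * B * C - 2 * A * C - 2 * A * B

/-- `F2 = -3B² + A² + C² + 2BC + 2AC - 2AB` for the `SL(2,ℝ)` cross curvature tensor. -/
def sl2F2 (A B C : ℝ) : ℝ :=
  -3 * B ^ 2 + A ^ 2 + C ^ 2 + 2 * B * C + 2 * A * C - 2 * A * B

/-- `F3 = -3C² + A² + B² + 2BC - 2AC + 2AB` for the `SL(2,ℝ)` cross curvature tensor. -/
def sl2F3 (A B C : ℝ) : ℝ :=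
  -3 * C ^ 2 + A ^ 2 + B ^ 2 + 2 * B * C - 2 * A * C + 2 * A * B

/-- A triple of functions solves the `SL(2,ℝ)` negative cross curvature flow ODE system
(with positivity) on a set `s ⊆ ℝ`. -/
def IsSolSL2 (A B C : ℝ → ℝ) (s : Set ℝ) : Prop :=
  ∀ t ∈ s,
    (0 < A t ∧ 0 < B t ∧ 0 < C t) ∧
    HasDerivAt A
      (-2 * A t * sl2F2 (A t) (B t) (C t) * sl2F3 (A t) (B t) (C t) /
        (A t * B t * C t) ^ 2) t ∧
    HasDerivAt B
      (-2 * B t * sl2F3 (A t) (B t) (C t) * sl2F1 (A t) (B t) (C t) /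
        (A t * B t * C t) ^ 2) t ∧
    HasDerivAt C
      (-2 * C t * sl2F1 (A t) (B t) (C t) * sl2F2 (A t) (B t) (C t) /
        (A t * B t * C t) ^ 2) t

/-- A maximal solution of the `SL(2,ℝ)` system on `{t | 0 ≤ t, t < T}` (`T ∈ (0,∞]` an
extended real): a solution admitting no extension to a strictly larger interval. -/
def IsMaxSolSL2 (A B C : ℝ → ℝ) (T : EReal) : Prop :=
  IsSolSL2 A B C {t : ℝ | 0 ≤ t ∧ (t : EReal) < T} ∧
  ∀ (A' B' C' : ℝ → ℝ) (T' : EReal), T < T' →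
    IsSolSL2 A' B' C' {t : ℝ | 0 ≤ t ∧ (t : EReal) < T'} →
    ¬ (∀ t : ℝ, 0 ≤ t → (t : EReal) < T → A' t = A t ∧ B' t = B t ∧ C' t = C t)

/-!
Rescaling time by `dt = (ABC)² / (A + B + C)⁴ ds` turns the flow into a system that is homogeneous
of degree one in `(A, B, C)`. In the coordinates `log A`, `log (B - C)`, `log C` its vector field is
bounded, so it has a solution for all `s`, and the condition `C < B` persists.

Along this solution `C / (B - C) * exp (B / A)` decreases and `A / B` is attracted by `1 - C / B`.
Together these facts confine the direction of `(A, B, C)` to a compact set on which the decrease is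
exponential, so that `C / B → 0` and then `A / B → 1` exponentially fast. Consequently
`(log (A * C))'` is integrable and `A * C` tends to a limit `L > 0`, while `(log C)' → -2`. The
original time is therefore bounded, by some `T`, and L'Hôpital's rule gives `C² / (T - t) → 64`,
hence `C ∼ 8 √(T - t)` and `A ∼ B ∼ (L / 8) / √(T - t)`. The solution is maximal because `C → 0`.
-/

open Set Filter Topology Asymptotics MeasureTheory
open scoped NNReal

/-! ### Bounded vector fields are complete -/

section BoundedField

variable {E : Type*} [NormedAddCommGroup E] [NormedSpace ℝ E] [FiniteDimensional ℝ E] {v : E → E}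

theorem exists_isIntegralCurveOn_Icc_of_norm_le (hv : LocallyLipschitz v) {L : ℝ≥0}
    (hL : ∀ p, ‖v p‖ ≤ L) (p₀ : E) {a : ℝ} (ha : 0 ≤ a) :
    ∃ γ : ℝ → E, γ 0 = p₀ ∧ IsIntegralCurveOn γ (fun _ => v) (Icc (-a) a) := by
  have := FiniteDimensional.complete ℝ E
  have := FiniteDimensional.proper ℝ E
  lift a to ℝ≥0 using ha
  obtain ⟨K, hK⟩ := hv.locallyLipschitzOn.exists_lipschitzOnWith_of_compact
    (isCompact_closedBall p₀ (L * a : ℝ≥0))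
  -- no integral curve leaves the ball of radius `L * a` during time `a`
  have hPL : IsPicardLindelof (fun _ => v) (tmin := -a) (tmax := a) ⟨0, by simp⟩ p₀
      (L * a) 0 L K :=
    .of_time_independent (fun p _ => hL p) hK (by simp)
  exact hPL.exists_eq_forall_mem_Icc_hasDerivWithinAt₀

theorem exists_isIntegralCurve_of_norm_le (hv : ContDiff ℝ 1 v) {L : ℝ≥0} (hL : ∀ p, ‖v p‖ ≤ L)
    (p₀ : E) : ∃ γ : ℝ → E, γ 0 = p₀ ∧ IsIntegralCurve γ fun _ => v := by
  have := FiniteDimensional.complete ℝ E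
  obtain ⟨γ, hγ0, hγ⟩ := (exists_isMIntegralCurve_iff_exists_isMIntegralCurveOn_Ioo
    (I := modelWithCornersSelf ℝ E) (contMDiff_vectorSpace_iff_contDiff.2 hv) p₀).2 fun a => by
      obtain ⟨γ, hγ0, hγ⟩ :=
        exists_isIntegralCurveOn_Icc_of_norm_le hv.locallyLipschitz hL p₀ (abs_nonneg a)
      have hIoo : Ioo (-a) a ⊆ Icc (-|a|) |a| :=
        Ioo_subset_Icc_self.trans (Icc_subset_Icc (neg_le_neg (le_abs_self a)) (le_abs_self a))
      exact ⟨γ, hγ0, fun s hs =>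
        ((hγ s (hIoo hs)).mono hIoo).hasFDerivWithinAt.hasMFDerivWithinAt⟩
  exact ⟨γ, hγ0, fun s => hasDerivAt_iff_hasFDerivAt.2 (hγ s).hasFDerivAt⟩

end BoundedField

/-! ### Scalar differential inequalities -/

theorem le_of_deriv_nonpos_of_lt {f f' : ℝ → ℝ} {a M : ℝ}
    (hf : ∀ s, a ≤ s → HasDerivAt f (f' s) s) (ha : f a ≤ M)
    (hM : ∀ s, a ≤ s → M < f s → f' s ≤ 0) {s : ℝ} (hs : a ≤ s) : f s ≤ M := by
  -- compare with the strict barriers `M + ε * (r - a + 1)`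
  have barrier : ∀ ε : ℝ, 0 < ε → f s ≤ M + ε * (s - a + 1) := by
    intro ε hε
    refine image_le_of_deriv_right_lt_deriv_boundary' (a := a) (b := s) (f' := f')
      (B := fun r => M + ε * (r - a + 1)) (B' := fun _ => ε)
      (fun r hr => (hf r hr.1).continuousAt.continuousWithinAt)
      (fun r hr => (hf r hr.1).hasDerivWithinAt) (by linarith) (by fun_prop) (fun r _ => ?_)
      (fun r hr heq => ?_) (right_mem_Icc.2 hs)
    · simpa using ((((hasDerivAt_id r).sub_const a).add_const 1).const_mul ε |>.const_add
        M).hasDerivWithinAt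
    · have : 0 < ε * (r - a + 1) := mul_pos hε (by linarith [hr.1])
      exact (hM r hr.1 (by linarith)).trans_lt hε
  refine le_of_forall_pos_le_add fun δ hδ => ?_
  have hlen : 0 < s - a + 1 := by linarith
  simpa [div_mul_cancel₀ δ hlen.ne'] using barrier (δ / (s - a + 1)) (by positivity)

theorem hasDerivAt_exp_const_mul (c s : ℝ) :
    HasDerivAt (fun s => Real.exp (c * s)) (c * Real.exp (c * s)) s := by
  simpa [mul_comm] using ((hasDerivAt_id s).const_mul c).exp

theorem isBigO_exp_neg_of_deriv_le {u u' : ℝ → ℝ} {ν c K : ℝ} (hνc : ν < c) (hK : 0 ≤ K)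
    (hu0 : ∀ s, 0 ≤ u s) (hu : ∀ s, HasDerivAt u (u' s) s)
    (hle : ∀ᶠ s in atTop, u' s ≤ -ν * u s + K * Real.exp (-c * s)) :
    u =O[atTop] fun s => Real.exp (-ν * s) := by
  obtain ⟨a, ha⟩ := eventually_atTop.1 hle
  set w : ℝ → ℝ := fun s => u s * Real.exp (ν * s) + K / (c - ν) * Real.exp ((ν - c) * s)
  have hw' (s : ℝ) : HasDerivAt w
      ((u' s + ν * u s - K * Real.exp (-c * s)) * Real.exp (ν * s)) s := by
    refine (((hu s).mul (hasDerivAt_exp_const_mul ν s)).add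
      ((hasDerivAt_exp_const_mul (ν - c) s).const_mul (K / (c - ν)))).congr_deriv ?_
    have hsplit : Real.exp ((ν - c) * s) = Real.exp (-c * s) * Real.exp (ν * s) := by
      rw [← Real.exp_add]; ring_nf
    have : c - ν ≠ 0 := (sub_pos.2 hνc).ne'
    rw [hsplit]
    field_simp
    ring
  have hw_anti : AntitoneOn w (Ici a) :=
    antitoneOn_of_hasDerivWithinAt_nonpos (convex_Ici a)
      (fun s _ => (hw' s).continuousAt.continuousWithinAt) (fun s _ => (hw' s).hasDerivWithinAt)
      fun s hs => mul_nonpos_of_nonpos_of_nonneg (by linarith [ha s (interior_subset hs)])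
        (Real.exp_pos _).le
  refine IsBigO.of_bound (w a) ?_
  filter_upwards [eventually_ge_atTop a] with s hs
  have hpos : 0 ≤ K / (c - ν) * Real.exp ((ν - c) * s) :=
    mul_nonneg (div_nonneg hK (sub_pos.2 hνc).le) (Real.exp_pos _).le
  have hle : u s * Real.exp (ν * s) ≤ w a :=
    (le_add_of_nonneg_right hpos).trans (hw_anti self_mem_Ici hs hs)
  rw [Real.norm_of_nonneg (hu0 s), Real.norm_of_nonneg (Real.exp_pos _).le, neg_mul, Real.exp_neg]
  exact (le_mul_inv_iff₀ (Real.exp_pos _)).2 hle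

theorem isBigO_exp_neg_of_deriv_le_neg_mul {u u' : ℝ → ℝ} {ν : ℝ} (hu0 : ∀ s, 0 ≤ u s)
    (hu : ∀ s, HasDerivAt u (u' s) s) (hle : ∀ᶠ s in atTop, u' s ≤ -ν * u s) :
    u =O[atTop] fun s => Real.exp (-ν * s) :=
  isBigO_exp_neg_of_deriv_le (lt_add_one ν) le_rfl hu0 hu (by simpa using hle)

theorem tendsto_zero_of_isBigO_exp_neg {f : ℝ → ℝ} {μ : ℝ} (hμ : 0 < μ)
    (hf : f =O[atTop] fun s => Real.exp (-μ * s)) : Tendsto f atTop (𝓝 0) :=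
  hf.trans_tendsto (Real.tendsto_exp_atBot.comp
    (tendsto_id.const_mul_atTop_of_neg (neg_neg_of_pos hμ)))

theorem isBigO_exp_neg_of_le {μ ν : ℝ} (hμν : μ ≤ ν) :
    (fun s => Real.exp (-ν * s)) =O[atTop] fun s => Real.exp (-μ * s) := by
  refine IsBigO.of_bound 1 ?_
  filter_upwards [eventually_ge_atTop 0] with s hs
  simpa using mul_le_mul_of_nonneg_right hμν hs

theorem exists_isBigO_exp_neg_of_deriv_eq_neg_mul_add {u u' q g : ℝ → ℝ} {k Q c : ℝ} (hk : 0 < k)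
    (hc : 0 < c) (hu : ∀ s, HasDerivAt u (u' s) s) (hu' : ∀ s, u' s = -q s * (u s + g s))
    (hkq : ∀ᶠ s in atTop, k ≤ q s) (hqQ : ∀ᶠ s in atTop, q s ≤ Q)
    (hg : g =O[atTop] fun s => Real.exp (-c * s)) :
    ∃ μ, 0 < μ ∧ u =O[atTop] fun s => Real.exp (-μ * s) := by
  obtain ⟨K, hgK⟩ := hg.isBigOWith
  obtain ⟨s₀, hks₀, hQs₀⟩ := (hkq.and hqQ).exists
  have hQ : 0 ≤ Q := hk.le.trans (hks₀.trans hQs₀)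
  set ν := min k c
  have hsq : (fun s => u s ^ 2) =O[atTop] fun s => Real.exp (-ν * s) := by
    refine isBigO_exp_neg_of_deriv_le (u' := fun s => 2 * u s * u' s) (K := Q * K ^ 2)
      (c := 2 * c) ((min_le_right k c).trans_lt (by linarith)) (mul_nonneg hQ (sq_nonneg K))
      (fun s => sq_nonneg _) (fun s => by simpa using (hu s).fun_pow 2) ?_
    filter_upwards [hkq, hqQ, hgK.bound] with s hks hQs hgs
    have hgsq : g s ^ 2 ≤ K ^ 2 * Real.exp (-(2 * c) * s) := by
      rw [Real.norm_eq_abs, Real.norm_eq_abs, Real.abs_exp] at hgs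
      calc g s ^ 2 = |g s| ^ 2 := (sq_abs _).symm
        _ ≤ (K * Real.exp (-c * s)) ^ 2 := by gcongr
        _ = K ^ 2 * Real.exp (-(2 * c) * s) := by
          rw [mul_pow, ← Real.exp_nat_mul]; push_cast; ring_nf
    have hqν : ν ≤ q s := (min_le_left k c).trans hks
    calc 2 * u s * u' s
        = -q s * u s ^ 2 + q s * g s ^ 2 - q s * (u s + g s) ^ 2 := by rw [hu']; ring
      _ ≤ -q s * u s ^ 2 + q s * g s ^ 2 :=
          sub_le_self _ (mul_nonneg (hk.le.trans hks) (sq_nonneg _))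
      _ ≤ -ν * u s ^ 2 + Q * (K ^ 2 * Real.exp (-(2 * c) * s)) := by gcongr
      _ = -ν * u s ^ 2 + Q * K ^ 2 * Real.exp (-(2 * c) * s) := by ring
  refine ⟨ν / 2, half_pos (lt_min hk hc), IsBigO.of_pow two_ne_zero (hsq.congr_right fun s => ?_)⟩
  rw [Pi.pow_apply, ← Real.exp_nat_mul]
  push_cast
  ring_nf

theorem exists_tendsto_of_deriv_isBigO_exp_neg {f f' : ℝ → ℝ} {μ : ℝ} (hμ : 0 < μ)
    (hf : ∀ s, HasDerivAt f (f' s) s) (hcont : Continuous f')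
    (hO : f' =O[atTop] fun s => Real.exp (-μ * s)) : ∃ l, Tendsto f atTop (𝓝 l) :=
  ⟨_, tendsto_limUnder_of_hasDerivAt_of_integrableOn_Ioi (a := 0) (fun s _ => hf s)
    (integrable_of_isBigO_exp_neg hμ hcont.continuousOn hO)⟩

/-! ### Changes of time -/

/-- `t` is the time change with density `φ = dt / ds`, normalised by `t 0 = 0`; it runs up to the
finite time `T` as `s → ∞`, and `σ` expresses `s` as a function of `t`. Only the values of `σ` on
the range of `t` are meaningful. -/
structure IsTimeChange (φ t σ : ℝ → ℝ) (T : ℝ) : Prop where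
  density_pos : ∀ s, 0 < φ s
  map_zero : t 0 = 0
  hasStrictDerivAt : ∀ s, HasStrictDerivAt t (φ s) s
  tendsto : Tendsto t atTop (𝓝 T)
  leftInverse : Function.LeftInverse σ t

namespace IsTimeChange

variable {φ t σ : ℝ → ℝ} {T : ℝ}

theorem strictMono (h : IsTimeChange φ t σ T) : StrictMono t :=
  strictMono_of_hasDerivAt_pos (fun s => (h.hasStrictDerivAt s).hasDerivAt) h.density_pos

theorem map_lt (h : IsTimeChange φ t σ T) (s : ℝ) : t s < T :=
  (h.strictMono (lt_add_one s)).trans_le (h.strictMono.monotone.ge_of_tendsto h.tendsto _)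

theorem terminal_pos (h : IsTimeChange φ t σ T) : 0 < T :=
  h.map_zero ▸ h.map_lt 0

theorem inv_zero (h : IsTimeChange φ t σ T) : σ 0 = 0 := by
  simpa only [h.map_zero] using h.leftInverse 0

theorem Ico_subset_range (h : IsTimeChange φ t σ T) : Ico 0 T ⊆ range t := by
  rintro τ ⟨hτ0, hτT⟩
  have hcont : Continuous t :=
    continuous_iff_continuousAt.2 fun s => (h.hasStrictDerivAt s).hasDerivAt.continuousAt
  obtain ⟨b, hb⟩ := (h.tendsto.eventually_const_lt hτT).exists
  exact mem_range_of_exists_le_of_exists_ge hcont ⟨0, h.map_zero.trans_le hτ0⟩ ⟨b, hb.le⟩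

theorem hasDerivAt_inv (h : IsTimeChange φ t σ T) (s : ℝ) : HasDerivAt σ (φ s)⁻¹ (t s) :=
  ((h.hasStrictDerivAt s).to_local_left_inverse (h.density_pos s).ne'
    (.of_forall h.leftInverse)).hasDerivAt

theorem hasDerivAt_comp_inv (h : IsTimeChange φ t σ T) {f : ℝ → ℝ} {f' s : ℝ}
    (hf : HasDerivAt f f' s) : HasDerivAt (f ∘ σ) (f' / φ s) (t s) := by
  rw [← h.leftInverse s] at hf
  exact hf.comp (t s) (h.hasDerivAt_inv s)

theorem eventually_map_inv_eq (h : IsTimeChange φ t σ T) : ∀ᶠ τ in 𝓝[<] T, t (σ τ) = τ := by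
  filter_upwards [Ico_mem_nhdsLT h.terminal_pos] with τ hτ
  obtain ⟨s, rfl⟩ := h.Ico_subset_range hτ
  rw [h.leftInverse]

theorem tendsto_inv (h : IsTimeChange φ t σ T) : Tendsto σ (𝓝[<] T) atTop := by
  refine Filter.tendsto_atTop.2 fun b => ?_
  filter_upwards [h.eventually_map_inv_eq, Ioo_mem_nhdsLT (h.map_lt b)] with τ hτ hbτ
  exact h.strictMono.le_iff_le.1 (hτ.symm ▸ hbτ.1.le)

theorem tendsto_comp_inv (h : IsTimeChange φ t σ T) {β : Type*} {f : ℝ → ℝ → β} {l : Filter β}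
    (hf : Tendsto (fun s => f s (t s)) atTop l) : Tendsto (fun τ => f (σ τ) τ) (𝓝[<] T) l :=
  (hf.comp h.tendsto_inv).congr' (h.eventually_map_inv_eq.mono fun τ hτ => by
    simp only [Function.comp_apply, hτ])

end IsTimeChange

theorem exists_isTimeChange {φ : ℝ → ℝ} (hφ : Continuous φ) (hpos : ∀ s, 0 < φ s)
    (hint : IntegrableOn φ (Ioi 0)) : ∃ t σ T, IsTimeChange φ t σ T := by
  set t : ℝ → ℝ := fun s => ∫ r in (0 : ℝ)..s, φ r
  have ht (s : ℝ) : HasStrictDerivAt t (φ s) s := hφ.integral_hasStrictDerivAt 0 s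
  have hmono : StrictMono t := strictMono_of_hasDerivAt_pos (fun s => (ht s).hasDerivAt) hpos
  exact ⟨t, Function.invFun t, ∫ r in Ioi (0 : ℝ), φ r,
    { density_pos := hpos
      map_zero := intervalIntegral.integral_same
      hasStrictDerivAt := ht
      tendsto := intervalIntegral_tendsto_integral_Ioi 0 hint tendsto_id
      leftInverse := Function.leftInverse_invFun hmono.injective }⟩

/-! ### Algebra of the cross curvature polynomials -/

section Polynomials

variable {A B C : ℝ}

theorem sl2F2_sub_sl2F1 : sl2F2 A B C - sl2F1 A B C = 4 * (A + B) * (A + C - B) := by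
  simp only [sl2F1, sl2F2]; ring

theorem sl2F1_add_sl2F3 : sl2F1 A B C + sl2F3 A B C = -2 * (A + B + C) * (A + C - B) := by
  simp only [sl2F1, sl2F3]; ring

theorem sl2F2_eq_sq_add_sub : sl2F2 A B C = (A + B + C) ^ 2 + 4 * B * C - 4 * B * (A + B + C) := by
  simp only [sl2F2]; ring

theorem sl2F3_eq_sq_add : sl2F3 A B C = (A + B - C) ^ 2 + 4 * C * (B - C) := by
  simp only [sl2F3]; ring

theorem mul_sl2F3_sub_mul_sl2F2 :
    B * sl2F3 A B C - C * sl2F2 A B C = (B - C) * ((A + B + C) ^ 2 + 4 * B * C) := by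
  simp only [sl2F2, sl2F3]; ring

theorem sl2F1_eq_sq_mul (hB : B ≠ 0) : sl2F1 A B C = B ^ 2 * sl2F1 (A / B) 1 (C / B) := by
  simp only [sl2F1]; field_simp

theorem sl2F2_eq_sq_mul (hB : B ≠ 0) : sl2F2 A B C = B ^ 2 * sl2F2 (A / B) 1 (C / B) := by
  simp only [sl2F2]; field_simp

theorem abs_sl2F1_le (hA : 0 ≤ A) (hB : 0 ≤ B) (hC : 0 ≤ C) :
    |sl2F1 A B C| ≤ 3 * (A + B + C) ^ 2 := by
  have := mul_nonneg hA hB; have := mul_nonneg hA hC; have := mul_nonneg hB hC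
  rw [abs_le, sl2F1]; constructor <;> nlinarith

theorem abs_sl2F2_le (hA : 0 ≤ A) (hB : 0 ≤ B) (hC : 0 ≤ C) :
    |sl2F2 A B C| ≤ 3 * (A + B + C) ^ 2 := by
  have := mul_nonneg hA hB; have := mul_nonneg hA hC; have := mul_nonneg hB hC
  rw [abs_le, sl2F2]; constructor <;> nlinarith

theorem abs_sl2F3_le (hA : 0 ≤ A) (hB : 0 ≤ B) (hC : 0 ≤ C) :
    |sl2F3 A B C| ≤ 3 * (A + B + C) ^ 2 := by
  have := mul_nonneg hA hB; have := mul_nonneg hA hC; have := mul_nonneg hB hC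
  rw [abs_le, sl2F3]; constructor <;> nlinarith

theorem sq_le_sl2F3 (hC : 0 ≤ C) (hCB : C ≤ B) : (A + B - C) ^ 2 ≤ sl2F3 A B C := by
  have := mul_nonneg hC (sub_nonneg.2 hCB)
  linarith [sl2F3_eq_sq_add (A := A) (B := B) (C := C)]

-- Up to a positive factor, the left-hand side is the derivative of `log (C / (B - C)) + B / A`.
theorem lyapunov_polynomial_le (hA : 0 ≤ A) (hC : 0 ≤ C) (hCB : C ≤ B) :
    A * sl2F1 A B C * (A + B + C) + sl2F3 A B C * (A + B) * (A + C - B)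
      ≤ -(1 / 4) * (A + B - C) ^ 4 := by
  obtain ⟨D, hD, rfl⟩ : ∃ D, 0 ≤ D ∧ B = C + D := ⟨B - C, sub_nonneg.2 hCB, by ring⟩
  have hquad : 0 ≤ 7 * A ^ 2 - 6 * A * D + 3 * D ^ 2 := by
    nlinarith [sq_nonneg (A - D), sq_nonneg A]
  have hcubic : 0 ≤ 9 * A ^ 3 + 3 * A ^ 2 * D - A * D ^ 2 + 5 * D ^ 3 := by
    have hcross : A * D ^ 2 ≤ A ^ 2 * D + D ^ 3 := by
      nlinarith [mul_nonneg hD (sq_nonneg (A - D)), mul_nonneg hA (sq_nonneg D)]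
    have := mul_nonneg (sq_nonneg A) hD
    linarith [pow_nonneg hA 3, pow_nonneg hD 3]
  have hquad' : 0 ≤ 8 * A ^ 2 - 4 * A * D + 4 * D ^ 2 := by
    nlinarith [sq_nonneg (A - D), sq_nonneg A]
  have hexpand : A * sl2F1 A (C + D) C * (A + (C + D) + C)
      + sl2F3 A (C + D) C * (A + (C + D)) * (A + C - (C + D))
      = -(1 / 4) * (A + D) ^ 4 - ((A + D) ^ 2 * (7 * A ^ 2 - 6 * A * D + 3 * D ^ 2) / 4
        + (9 * A ^ 3 + 3 * A ^ 2 * D - A * D ^ 2 + 5 * D ^ 3) * C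
        + (8 * A ^ 2 - 4 * A * D + 4 * D ^ 2) * C ^ 2) := by
    simp only [sl2F1, sl2F3]; ring
  rw [hexpand, show A + (C + D) - C = A + D by ring]
  exact sub_le_self _ (by positivity)

end Polynomials

/-! ### The normalised flow -/

/-- The cross curvature flow in the region `C < B`, with respect to the time `s` given by
`dt = (ABC)² / (A + B + C)⁴ ds`. This choice makes the logarithmic derivatives of `A`, `B`, `C`
invariant under rescaling of `(A, B, C)`, hence bounded. -/
structure IsNormalizedFlow (A B C : ℝ → ℝ) : Prop where
  A_pos : ∀ s, 0 < A s
  C_pos : ∀ s, 0 < C s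
  C_lt_B : ∀ s, C s < B s
  hasDerivAt_A : ∀ s, HasDerivAt A (-2 * A s * sl2F2 (A s) (B s) (C s) * sl2F3 (A s) (B s) (C s) /
    (A s + B s + C s) ^ 4) s
  hasDerivAt_B : ∀ s, HasDerivAt B (-2 * B s * sl2F3 (A s) (B s) (C s) * sl2F1 (A s) (B s) (C s) /
    (A s + B s + C s) ^ 4) s
  hasDerivAt_C : ∀ s, HasDerivAt C (-2 * C s * sl2F1 (A s) (B s) (C s) * sl2F2 (A s) (B s) (C s) /
    (A s + B s + C s) ^ 4) s

/-- The vector field of the normalised flow in the coordinates `(log A, log (B - C), log C)`,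
in which the region `0 < A`, `0 < C < B` becomes all of `ℝ³`. -/
noncomputable def normalizedField (p : ℝ × ℝ × ℝ) : ℝ × ℝ × ℝ :=
  let A := Real.exp p.1
  let C := Real.exp p.2.2
  let B := C + Real.exp p.2.1
  (-2 * sl2F2 A B C * sl2F3 A B C / (A + B + C) ^ 4,
    -2 * sl2F1 A B C * ((A + B + C) ^ 2 + 4 * B * C) / (A + B + C) ^ 4,
    -2 * sl2F1 A B C * sl2F2 A B C / (A + B + C) ^ 4)

theorem contDiff_normalizedField : ContDiff ℝ 1 normalizedField := by
  have hne (p : ℝ × ℝ × ℝ) :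
      (Real.exp p.1 + (Real.exp p.2.2 + Real.exp p.2.1) + Real.exp p.2.2) ^ 4 ≠ 0 := by positivity
  unfold normalizedField sl2F1 sl2F2 sl2F3
  exact .prodMk (.div (by fun_prop) (by fun_prop) hne)
    (.prodMk (.div (by fun_prop) (by fun_prop) hne) (.div (by fun_prop) (by fun_prop) hne))

theorem abs_neg_two_mul_mul_div_pow_four_le {P Q S : ℝ} (hS : 0 < S) (hP : |P| ≤ 3 * S ^ 2)
    (hQ : |Q| ≤ 3 * S ^ 2) : |-2 * P * Q / S ^ 4| ≤ 18 := by
  rw [abs_div, abs_mul, abs_mul, abs_of_pos (pow_pos hS 4), div_le_iff₀ (pow_pos hS 4)]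
  calc |(-2 : ℝ)| * |P| * |Q| ≤ |(-2 : ℝ)| * (3 * S ^ 2) * (3 * S ^ 2) := by gcongr
    _ = 18 * S ^ 4 := by norm_num; ring

theorem norm_normalizedField_le (p : ℝ × ℝ × ℝ) : ‖normalizedField p‖ ≤ (18 : ℝ≥0) := by
  have hA := Real.exp_pos p.1
  have hC := Real.exp_pos p.2.2
  have hB : 0 < Real.exp p.2.2 + Real.exp p.2.1 := by positivity
  unfold normalizedField
  set A := Real.exp p.1
  set C := Real.exp p.2.2
  set B := C + Real.exp p.2.1
  have hS : 0 < A + B + C := by positivity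
  have hF1 := abs_sl2F1_le hA.le hB.le hC.le
  have hF2 := abs_sl2F2_le hA.le hB.le hC.le
  have hF3 := abs_sl2F3_le hA.le hB.le hC.le
  have hBC : |(A + B + C) ^ 2 + 4 * B * C| ≤ 3 * (A + B + C) ^ 2 := by
    rw [abs_of_pos (by positivity)]
    nlinarith [mul_pos hA hB, mul_pos hA hC]
  exact max_le (abs_neg_two_mul_mul_div_pow_four_le hS hF2 hF3) (max_le
    (abs_neg_two_mul_mul_div_pow_four_le hS hF1 hBC)
    (abs_neg_two_mul_mul_div_pow_four_le hS hF1 hF2))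

theorem exists_isNormalizedFlow {A₀ B₀ C₀ : ℝ} (hA₀ : 0 < A₀) (hC₀ : 0 < C₀) (hCB₀ : C₀ < B₀) :
    ∃ A B C : ℝ → ℝ, A 0 = A₀ ∧ B 0 = B₀ ∧ C 0 = C₀ ∧ IsNormalizedFlow A B C := by
  obtain ⟨γ, hγ0, hγ⟩ := exists_isIntegralCurve_of_norm_le contDiff_normalizedField
    norm_normalizedField_le (Real.log A₀, Real.log (B₀ - C₀), Real.log C₀)
  have hlogA (s : ℝ) := (hasFDerivAt_fst (𝕜 := ℝ) (p := γ s)).comp_hasDerivAt s (hγ s)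
  have hsnd (s : ℝ) := (hasFDerivAt_snd (𝕜 := ℝ) (p := γ s)).comp_hasDerivAt s (hγ s)
  have hlogD (s : ℝ) := (hasFDerivAt_fst (𝕜 := ℝ) (p := (γ s).2)).comp_hasDerivAt s (hsnd s)
  have hlogC (s : ℝ) := (hasFDerivAt_snd (𝕜 := ℝ) (p := (γ s).2)).comp_hasDerivAt s (hsnd s)
  refine ⟨fun s => Real.exp (γ s).1, fun s => Real.exp (γ s).2.2 + Real.exp (γ s).2.1,
    fun s => Real.exp (γ s).2.2, ?_, ?_, ?_,
    { A_pos := fun s => Real.exp_pos _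
      C_pos := fun s => Real.exp_pos _
      C_lt_B := fun s => lt_add_of_pos_right _ (Real.exp_pos _)
      hasDerivAt_A := fun s => (hlogA s).exp.congr_deriv ?_
      hasDerivAt_B := fun s => ((hlogC s).exp.add (hlogD s).exp).congr_deriv ?_
      hasDerivAt_C := fun s => (hlogC s).exp.congr_deriv ?_ }⟩
  · simp [hγ0, Real.exp_log hA₀]
  · simp [hγ0, Real.exp_log hC₀, Real.exp_log (sub_pos.2 hCB₀)]
  · simp [hγ0, Real.exp_log hC₀]
  · simp only [Function.comp_apply, ContinuousLinearMap.coe_fst', normalizedField]; ring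
  · have hid := mul_sl2F3_sub_mul_sl2F2 (A := Real.exp (γ s).1)
      (B := Real.exp (γ s).2.2 + Real.exp (γ s).2.1) (C := Real.exp (γ s).2.2)
    simp only [Function.comp_apply, ContinuousLinearMap.coe_fst', ContinuousLinearMap.coe_snd',
      normalizedField]
    linear_combination (2 * sl2F1 (Real.exp (γ s).1) (Real.exp (γ s).2.2 + Real.exp (γ s).2.1)
      (Real.exp (γ s).2.2) / (Real.exp (γ s).1 + (Real.exp (γ s).2.2 + Real.exp (γ s).2.1)
        + Real.exp (γ s).2.2) ^ 4) * hid
  · simp only [Function.comp_apply, ContinuousLinearMap.coe_snd', normalizedField]; ring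

/-- The rate at which `A / B` relaxes to `1 - C / B` along the normalised flow. -/
noncomputable def relaxationRate (A B C : ℝ) : ℝ :=
  8 * A * sl2F3 A B C * (A + B) / (A + B + C) ^ 4

/-- The function `C / (B - C) * exp (B / A)`, which decreases along the normalised flow. It controls
`C / (B - C)`, and the weight `exp (B / A)` absorbs the regime where `sl2F1` is positive. -/
noncomputable def lyapunov (A B C : ℝ) : ℝ :=
  C / (B - C) * Real.exp (B / A)

theorem relaxationRate_nonneg {A B C : ℝ} (hA : 0 < A) (hC : 0 < C) (hCB : C < B) :
    0 ≤ relaxationRate A B C := by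
  have hB : 0 < B := hC.trans hCB
  have hF3 : 0 ≤ sl2F3 A B C := (sq_nonneg _).trans (sq_le_sl2F3 hC.le hCB.le)
  rw [relaxationRate]
  positivity

theorem relaxationRate_le {A B C : ℝ} (hA : 0 < A) (hB : 0 < B) (hC : 0 < C) :
    relaxationRate A B C ≤ 24 := by
  have hF3 := (le_abs_self _).trans (abs_sl2F3_le hA.le hB.le hC.le)
  have hAB : A * (A + B) ≤ (A + B + C) ^ 2 :=
    (mul_le_mul (by linarith) (by linarith) (by positivity) (by positivity)).trans_eq (sq _).symm
  rw [relaxationRate, div_le_iff₀ (by positivity)]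
  calc 8 * A * sl2F3 A B C * (A + B)
      = 8 * (A * (A + B)) * sl2F3 A B C := by ring
    _ ≤ 8 * (A * (A + B)) * (3 * (A + B + C) ^ 2) := by gcongr
    _ ≤ 8 * (A + B + C) ^ 2 * (3 * (A + B + C) ^ 2) := by gcongr
    _ = 24 * (A + B + C) ^ 4 := by ring

theorem le_relaxationRate {A B C δ : ℝ} (hA : 0 < A) (hC : 0 < C) (hCB : C < B) (hδ : 0 < δ)
    (hδA : δ * (A + B + C) ≤ A) : 8 * δ ^ 4 ≤ relaxationRate A B C := by
  have hB : 0 < B := hC.trans hCB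
  have hF3 : (δ * (A + B + C)) ^ 2 ≤ sl2F3 A B C :=
    (pow_le_pow_left₀ (by positivity) (by linarith) 2).trans (sq_le_sl2F3 hC.le hCB.le)
  rw [relaxationRate, le_div_iff₀ (by positivity)]
  calc 8 * δ ^ 4 * (A + B + C) ^ 4
      = 8 * (δ * (A + B + C)) * (δ * (A + B + C)) * (δ * (A + B + C)) ^ 2 := by ring
    _ ≤ 8 * A * (A + B) * sl2F3 A B C := by gcongr; linarith
    _ = 8 * A * sl2F3 A B C * (A + B) := by ring

theorem lyapunov_nonneg {A B C : ℝ} (hC : 0 < C) (hCB : C < B) : 0 ≤ lyapunov A B C :=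
  mul_nonneg (div_nonneg hC.le (sub_pos.2 hCB).le) (Real.exp_pos _).le

theorem div_sub_le_lyapunov {A B C : ℝ} (hA : 0 < A) (hC : 0 < C) (hCB : C < B) :
    C / (B - C) ≤ lyapunov A B C :=
  le_mul_of_one_le_right (div_nonneg hC.le (sub_pos.2 hCB).le)
    (Real.one_le_exp (div_nonneg (hC.trans hCB).le hA.le))

namespace IsNormalizedFlow

variable {A B C : ℝ → ℝ}

theorem B_pos (h : IsNormalizedFlow A B C) (s : ℝ) : 0 < B s :=
  (h.C_pos s).trans (h.C_lt_B s)

theorem sum_pos (h : IsNormalizedFlow A B C) (s : ℝ) : 0 < A s + B s + C s :=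
  add_pos (add_pos (h.A_pos s) (h.B_pos s)) (h.C_pos s)

theorem continuous_A (h : IsNormalizedFlow A B C) : Continuous A :=
  continuous_iff_continuousAt.2 fun s => (h.hasDerivAt_A s).continuousAt

theorem continuous_B (h : IsNormalizedFlow A B C) : Continuous B :=
  continuous_iff_continuousAt.2 fun s => (h.hasDerivAt_B s).continuousAt

theorem continuous_C (h : IsNormalizedFlow A B C) : Continuous C :=
  continuous_iff_continuousAt.2 fun s => (h.hasDerivAt_C s).continuousAt

/-! ### Confinement to a compact set of directions -/

theorem hasDerivAt_A_div_B (h : IsNormalizedFlow A B C) (s : ℝ) :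
    HasDerivAt (fun s => A s / B s)
      (-relaxationRate (A s) (B s) (C s) * (A s / B s - 1 + C s / B s)) s := by
  have hB := (h.B_pos s).ne'
  have hS := (h.sum_pos s).ne'
  refine ((h.hasDerivAt_A s).div (h.hasDerivAt_B s) hB).congr_deriv ?_
  rw [relaxationRate]
  field_simp
  linear_combination -2 * A s * sl2F3 (A s) (B s) (C s) *
    sl2F2_sub_sl2F1 (A := A s) (B := B s) (C := C s)

theorem hasDerivAt_B_div_A (h : IsNormalizedFlow A B C) (s : ℝ) :
    HasDerivAt (fun s => B s / A s)
      (8 * B s * sl2F3 (A s) (B s) (C s) * (A s + B s) * (A s + C s - B s) /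
        (A s * (A s + B s + C s) ^ 4)) s := by
  have hA := (h.A_pos s).ne'
  have hS := (h.sum_pos s).ne'
  refine ((h.hasDerivAt_B s).div (h.hasDerivAt_A s) hA).congr_deriv ?_
  field_simp
  linear_combination 2 * B s * sl2F3 (A s) (B s) (C s) *
    sl2F2_sub_sl2F1 (A := A s) (B := B s) (C := C s)

theorem hasDerivAt_C_div_B_sub_C (h : IsNormalizedFlow A B C) (s : ℝ) :
    HasDerivAt (fun s => C s / (B s - C s))
      (C s / (B s - C s) * (8 * B s * sl2F1 (A s) (B s) (C s) / (A s + B s + C s) ^ 3)) s := by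
  have hD := (sub_pos.2 (h.C_lt_B s)).ne'
  have hS := (h.sum_pos s).ne'
  refine ((h.hasDerivAt_C s).div ((h.hasDerivAt_B s).fun_sub (h.hasDerivAt_C s)) hD).congr_deriv ?_
  field_simp
  linear_combination 2 * C s * sl2F1 (A s) (B s) (C s) * (
    mul_sl2F3_sub_mul_sl2F2 (A := A s) (B := B s) (C := C s) -
    (B s - C s) * sl2F2_eq_sq_add_sub (A := A s) (B := B s) (C := C s))

theorem exists_hasDerivAt_lyapunov_le (h : IsNormalizedFlow A B C) :
    ∃ W' : ℝ → ℝ, ∀ s, HasDerivAt (fun s => lyapunov (A s) (B s) (C s)) (W' s) s ∧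
      W' s ≤ -(2 * (B s / A s) * ((A s + B s - C s) / (A s + B s + C s)) ^ 4) *
        lyapunov (A s) (B s) (C s) := by
  refine ⟨_, fun s => ⟨(h.hasDerivAt_C_div_B_sub_C s).mul (h.hasDerivAt_B_div_A s).exp, ?_⟩⟩
  have hA := h.A_pos s
  have hB := h.B_pos s
  have hS := h.sum_pos s
  have hW := lyapunov_nonneg (A := A s) (h.C_pos s) (h.C_lt_B s)
  have hpoly := lyapunov_polynomial_le hA.le (h.C_pos s).le (h.C_lt_B s).le
  calc _ = 8 * B s / (A s * (A s + B s + C s) ^ 4) *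
        (A s * sl2F1 (A s) (B s) (C s) * (A s + B s + C s) +
          sl2F3 (A s) (B s) (C s) * (A s + B s) * (A s + C s - B s)) *
        lyapunov (A s) (B s) (C s) := by
        rw [lyapunov]; field_simp
    _ ≤ 8 * B s / (A s * (A s + B s + C s) ^ 4) * (-(1 / 4) * (A s + B s - C s) ^ 4) *
        lyapunov (A s) (B s) (C s) := by gcongr
    _ = _ := by field_simp; ring

theorem lyapunov_le_lyapunov_zero (h : IsNormalizedFlow A B C) {s : ℝ} (hs : 0 ≤ s) :
    lyapunov (A s) (B s) (C s) ≤ lyapunov (A 0) (B 0) (C 0) := by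
  obtain ⟨W', hW'⟩ := h.exists_hasDerivAt_lyapunov_le
  refine le_of_deriv_nonpos_of_lt (fun r _ => (hW' r).1) le_rfl (fun r _ _ => ?_) hs
  have hBA := div_pos (h.B_pos r) (h.A_pos r)
  exact (hW' r).2.trans (mul_nonpos_of_nonpos_of_nonneg (neg_nonpos.2 (by positivity))
    (lyapunov_nonneg (A := A r) (h.C_pos r) (h.C_lt_B r)))

theorem A_div_B_le (h : IsNormalizedFlow A B C) {s : ℝ} (hs : 0 ≤ s) :
    A s / B s ≤ max (A 0 / B 0) 1 := by
  refine le_of_deriv_nonpos_of_lt (fun r _ => h.hasDerivAt_A_div_B r) (le_max_left _ _)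
    (fun r _ hr => ?_) hs
  have hAB : 1 < A r / B r := (le_max_right _ _).trans_lt hr
  have hCB := div_pos (h.C_pos r) (h.B_pos r)
  exact mul_nonpos_of_nonpos_of_nonneg
    (neg_nonpos.2 (relaxationRate_nonneg (h.A_pos r) (h.C_pos r) (h.C_lt_B r))) (by linarith)

theorem exists_mul_B_le_B_sub_C (h : IsNormalizedFlow A B C) :
    ∃ κ, 0 < κ ∧ ∀ s, 0 ≤ s → κ * B s ≤ B s - C s := by
  have hW := lyapunov_nonneg (A := A 0) (h.C_pos 0) (h.C_lt_B 0)
  refine ⟨(1 + lyapunov (A 0) (B 0) (C 0))⁻¹, by positivity, fun s hs => ?_⟩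
  have hle : C s / (B s - C s) ≤ lyapunov (A 0) (B 0) (C 0) :=
    (div_sub_le_lyapunov (h.A_pos s) (h.C_pos s) (h.C_lt_B s)).trans
      (h.lyapunov_le_lyapunov_zero hs)
  rw [div_le_iff₀ (sub_pos.2 (h.C_lt_B s))] at hle
  rw [inv_mul_le_iff₀ (by positivity)]
  linarith

theorem exists_mul_B_le_A (h : IsNormalizedFlow A B C) :
    ∃ m, 0 < m ∧ ∀ s, 0 ≤ s → m * B s ≤ A s := by
  obtain ⟨κ, hκ, hκB⟩ := h.exists_mul_B_le_B_sub_C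
  refine ⟨min (A 0 / B 0) κ, lt_min (div_pos (h.A_pos 0) (h.B_pos 0)) hκ, fun s hs => ?_⟩
  rw [← le_div_iff₀ (h.B_pos s), ← neg_le_neg_iff]
  refine le_of_deriv_nonpos_of_lt (fun r _ => (h.hasDerivAt_A_div_B r).neg)
    (neg_le_neg (min_le_left _ _)) (fun r hr hlt => ?_) hs
  have hAκ : A r / B r < κ := (neg_lt_neg_iff.1 hlt).trans_le (min_le_right _ _)
  have hκ_le : κ ≤ 1 - C r / B r := by
    rw [one_sub_div (h.B_pos r).ne', le_div_iff₀ (h.B_pos r)]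
    exact hκB r hr
  rw [neg_mul, neg_neg]
  exact mul_nonpos_of_nonneg_of_nonpos
    (relaxationRate_nonneg (h.A_pos r) (h.C_pos r) (h.C_lt_B r)) (by linarith)

theorem exists_mul_sum_le (h : IsNormalizedFlow A B C) :
    ∃ δ, 0 < δ ∧ ∀ s, 0 ≤ s →
      δ * (A s + B s + C s) ≤ A s ∧ δ * (A s + B s + C s) ≤ B s - C s := by
  obtain ⟨κ, hκ, hκB⟩ := h.exists_mul_B_le_B_sub_C
  obtain ⟨m, hm, hmB⟩ := h.exists_mul_B_le_A
  set M := max (A 0 / B 0) 1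
  have hM : 0 < M := one_pos.trans_le (le_max_right _ _)
  refine ⟨min m κ / (M + 2), div_pos (lt_min hm hκ) (by linarith), fun s hs => ?_⟩
  have hB := h.B_pos s
  have hA : A s ≤ M * B s := (div_le_iff₀ hB).1 (h.A_div_B_le hs)
  have hle : min m κ / (M + 2) * (A s + B s + C s) ≤ min m κ * B s := by
    rw [div_mul_eq_mul_div, div_le_iff₀ (by linarith), mul_assoc]
    exact mul_le_mul_of_nonneg_left (by linarith [h.C_lt_B s]) (lt_min hm hκ).le
  exact ⟨hle.trans ((by gcongr; exact min_le_left m κ : min m κ * B s ≤ m * B s).trans (hmB s hs)),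
    hle.trans ((by gcongr; exact min_le_right m κ : min m κ * B s ≤ κ * B s).trans (hκB s hs))⟩

/-! ### Exponential convergence of the ratios -/

theorem exists_isBigO_exp_neg_C_div_B (h : IsNormalizedFlow A B C) :
    ∃ c, 0 < c ∧ (fun s => C s / B s) =O[atTop] fun s => Real.exp (-c * s) := by
  obtain ⟨δ, hδ, hδS⟩ := h.exists_mul_sum_le
  obtain ⟨W', hW'⟩ := h.exists_hasDerivAt_lyapunov_le
  have hW : (fun s => lyapunov (A s) (B s) (C s)) =O[atTop]
      fun s => Real.exp (-(2 * δ * δ ^ 4) * s) := by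
    refine isBigO_exp_neg_of_deriv_le_neg_mul
      (fun s => lyapunov_nonneg (h.C_pos s) (h.C_lt_B s)) (fun s => (hW' s).1) ?_
    filter_upwards [eventually_ge_atTop 0] with s hs
    have hD := (hδS s hs).2
    have hBA : δ ≤ B s / A s := by
      rw [le_div_iff₀ (h.A_pos s)]
      linarith [h.C_pos s, mul_pos hδ (h.B_pos s), mul_pos hδ (h.C_pos s)]
    have hABC : δ ≤ (A s + B s - C s) / (A s + B s + C s) := by
      rw [le_div_iff₀ (h.sum_pos s)]
      linarith [h.A_pos s]
    have hrate : 2 * δ * δ ^ 4 ≤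
        2 * (B s / A s) * ((A s + B s - C s) / (A s + B s + C s)) ^ 4 :=
      mul_le_mul (by linarith) (by gcongr) (by positivity) (by linarith)
    exact (hW' s).2.trans (mul_le_mul_of_nonneg_right (neg_le_neg hrate)
      (lyapunov_nonneg (h.C_pos s) (h.C_lt_B s)))
  refine ⟨2 * δ * δ ^ 4, by positivity, (IsBigO.of_bound 1 (.of_forall fun s => ?_)).trans hW⟩
  have hCB : C s / B s ≤ C s / (B s - C s) :=
    div_le_div_of_nonneg_left (h.C_pos s).le (sub_pos.2 (h.C_lt_B s)) (by linarith [h.C_pos s])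
  rw [one_mul, Real.norm_of_nonneg (div_pos (h.C_pos s) (h.B_pos s)).le,
    Real.norm_of_nonneg (lyapunov_nonneg (A := A s) (h.C_pos s) (h.C_lt_B s))]
  exact hCB.trans (div_sub_le_lyapunov (h.A_pos s) (h.C_pos s) (h.C_lt_B s))

theorem exists_isBigO_exp_neg_ratios (h : IsNormalizedFlow A B C) :
    ∃ μ, 0 < μ ∧ ((fun s => A s / B s - 1) =O[atTop] fun s => Real.exp (-μ * s)) ∧
      (fun s => C s / B s) =O[atTop] fun s => Real.exp (-μ * s) := by
  obtain ⟨c, hc, hCB⟩ := h.exists_isBigO_exp_neg_C_div_B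
  obtain ⟨δ, hδ, hδS⟩ := h.exists_mul_sum_le
  obtain ⟨ν, hν, hAB⟩ := exists_isBigO_exp_neg_of_deriv_eq_neg_mul_add (k := 8 * δ ^ 4)
    (by positivity) hc (fun s => (h.hasDerivAt_A_div_B s).sub_const 1) (fun s => rfl)
    ((eventually_ge_atTop 0).mono fun s hs =>
      le_relaxationRate (h.A_pos s) (h.C_pos s) (h.C_lt_B s) hδ (hδS s hs).1)
    (.of_forall fun s => relaxationRate_le (h.A_pos s) (h.B_pos s) (h.C_pos s)) hCB
  exact ⟨min ν c, lt_min hν hc, hAB.trans (isBigO_exp_neg_of_le (min_le_left ν c)),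
    hCB.trans (isBigO_exp_neg_of_le (min_le_right ν c))⟩

theorem tendsto_A_div_B (h : IsNormalizedFlow A B C) :
    Tendsto (fun s => A s / B s) atTop (𝓝 1) := by
  obtain ⟨μ, hμ, hAB, -⟩ := h.exists_isBigO_exp_neg_ratios
  simpa using (tendsto_zero_of_isBigO_exp_neg hμ hAB).add_const 1

theorem tendsto_C_div_B (h : IsNormalizedFlow A B C) :
    Tendsto (fun s => C s / B s) atTop (𝓝 0) := by
  obtain ⟨μ, hμ, -, hCB⟩ := h.exists_isBigO_exp_neg_ratios
  exact tendsto_zero_of_isBigO_exp_neg hμ hCB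

theorem tendsto_sl2F1_mul_sl2F2_div (h : IsNormalizedFlow A B C) :
    Tendsto (fun s => sl2F1 (A s) (B s) (C s) * sl2F2 (A s) (B s) (C s) / B s ^ 4) atTop
      (𝓝 16) := by
  have hcont : Continuous fun p : ℝ × ℝ => sl2F1 p.1 1 p.2 * sl2F2 p.1 1 p.2 := by
    unfold sl2F1 sl2F2; fun_prop
  have hlim := (hcont.tendsto (1, 0)).comp (h.tendsto_A_div_B.prodMk_nhds h.tendsto_C_div_B)
  rw [show sl2F1 1 1 0 * sl2F2 1 1 0 = 16 by norm_num [sl2F1, sl2F2]] at hlim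
  refine hlim.congr fun s => ?_
  have hB := (h.B_pos s).ne'
  rw [sl2F1_eq_sq_mul hB, sl2F2_eq_sq_mul hB, Function.comp_apply]
  field_simp

/-! ### Asymptotics in the original time -/

theorem tendsto_sl2F1_mul_sl2F2_div_sum (h : IsNormalizedFlow A B C) :
    Tendsto (fun s => sl2F1 (A s) (B s) (C s) * sl2F2 (A s) (B s) (C s) /
      (A s + B s + C s) ^ 4) atTop (𝓝 1) := by
  have hsum : Tendsto (fun s => (A s + B s + C s) / B s) atTop (𝓝 2) := by
    have hlim := (h.tendsto_A_div_B.add_const 1).add h.tendsto_C_div_B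
    rw [show (1 + 1 + 0 : ℝ) = 2 by norm_num] at hlim
    refine hlim.congr fun s => ?_
    rw [add_div, add_div, div_self (h.B_pos s).ne']
  have hlim := h.tendsto_sl2F1_mul_sl2F2_div.div (hsum.pow 4) (by norm_num)
  rw [show (16 / 2 ^ 4 : ℝ) = 1 by norm_num] at hlim
  refine hlim.congr fun s => ?_
  have hB := (h.B_pos s).ne'
  have hS := (h.sum_pos s).ne'
  rw [Pi.div_apply]
  field_simp

theorem isBigO_exp_neg_C (h : IsNormalizedFlow A B C) :
    C =O[atTop] fun s => Real.exp (-1 * s) := by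
  refine isBigO_exp_neg_of_deriv_le_neg_mul (fun s => (h.C_pos s).le) h.hasDerivAt_C ?_
  filter_upwards [h.tendsto_sl2F1_mul_sl2F2_div_sum.eventually_const_lt one_half_lt_one] with s hs
  calc _ = -2 * C s * (sl2F1 (A s) (B s) (C s) * sl2F2 (A s) (B s) (C s) /
        (A s + B s + C s) ^ 4) := by ring
    _ ≤ -2 * C s * (1 / 2) :=
        mul_le_mul_of_nonpos_left hs.le (by linarith [h.C_pos s])
    _ = -1 * C s := by ring

theorem tendsto_C (h : IsNormalizedFlow A B C) : Tendsto C atTop (𝓝 0) :=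
  tendsto_zero_of_isBigO_exp_neg one_pos h.isBigO_exp_neg_C

theorem hasDerivAt_log_A_add_log_C (h : IsNormalizedFlow A B C) (s : ℝ) :
    HasDerivAt (fun s => Real.log (A s) + Real.log (C s))
      (4 * sl2F2 (A s) (B s) (C s) * (A s + C s - B s) / (A s + B s + C s) ^ 3) s := by
  have hA := (h.A_pos s).ne'
  have hC := (h.C_pos s).ne'
  have hS := (h.sum_pos s).ne'
  refine (((h.hasDerivAt_A s).log hA).add ((h.hasDerivAt_C s).log hC)).congr_deriv ?_
  field_simp
  linear_combination -2 * sl2F2 (A s) (B s) (C s) *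
    sl2F1_add_sl2F3 (A := A s) (B := B s) (C := C s)

theorem exists_isBigO_exp_neg_deriv_log (h : IsNormalizedFlow A B C) :
    ∃ μ, 0 < μ ∧ (fun s => 4 * sl2F2 (A s) (B s) (C s) * (A s + C s - B s) /
      (A s + B s + C s) ^ 3) =O[atTop] fun s => Real.exp (-μ * s) := by
  obtain ⟨μ, hμ, hAB, hCB⟩ := h.exists_isBigO_exp_neg_ratios
  refine ⟨μ, hμ, (IsBigO.of_bound 12 (.of_forall fun s => ?_)).trans (hAB.add hCB)⟩
  have hA := h.A_pos s
  have hB := h.B_pos s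
  have hC := h.C_pos s
  have hF2 := abs_sl2F2_le hA.le hB.le hC.le
  have hgap : |A s + C s - B s| = B s * |A s / B s - 1 + C s / B s| := by
    rw [show A s / B s - 1 + C s / B s = (A s + C s - B s) / B s by field_simp; ring, abs_div,
      abs_of_pos hB, mul_div_cancel₀ _ hB.ne']
  rw [Real.norm_eq_abs, Real.norm_eq_abs, abs_div, abs_of_pos (pow_pos (h.sum_pos s) 3),
    div_le_iff₀ (pow_pos (h.sum_pos s) 3), abs_mul, abs_mul, abs_of_pos four_pos, hgap]
  calc 4 * |sl2F2 (A s) (B s) (C s)| * (B s * |A s / B s - 1 + C s / B s|)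
      ≤ 4 * (3 * (A s + B s + C s) ^ 2) *
          ((A s + B s + C s) * |A s / B s - 1 + C s / B s|) := by gcongr; linarith
    _ = 12 * |A s / B s - 1 + C s / B s| * (A s + B s + C s) ^ 3 := by ring

theorem exists_tendsto_A_mul_C (h : IsNormalizedFlow A B C) :
    ∃ L, 0 < L ∧ Tendsto (fun s => A s * C s) atTop (𝓝 L) := by
  obtain ⟨μ, hμ, hO⟩ := h.exists_isBigO_exp_neg_deriv_log
  have hcont : Continuous fun s => 4 * sl2F2 (A s) (B s) (C s) * (A s + C s - B s) /
      (A s + B s + C s) ^ 3 := by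
    have := h.continuous_A
    have := h.continuous_B
    have := h.continuous_C
    unfold sl2F2
    exact .div (by fun_prop) (by fun_prop) fun s => (pow_pos (h.sum_pos s) 3).ne'
  obtain ⟨l, hl⟩ := exists_tendsto_of_deriv_isBigO_exp_neg hμ h.hasDerivAt_log_A_add_log_C hcont hO
  refine ⟨Real.exp l, Real.exp_pos l, ((Real.continuous_exp.tendsto l).comp hl).congr fun s => ?_⟩
  rw [Function.comp_apply, Real.exp_add, Real.exp_log (h.A_pos s), Real.exp_log (h.C_pos s)]

end IsNormalizedFlow

/-- The density `dt / ds` of the original time `t` of the cross curvature flow with respect to the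
time `s` of the normalised flow. -/
noncomputable def timeDensity (A B C : ℝ) : ℝ :=
  (A * B * C) ^ 2 / (A + B + C) ^ 4

theorem timeDensity_le_sq {A B C : ℝ} (hA : 0 < A) (hB : 0 < B) (hC : 0 < C) :
    timeDensity A B C ≤ C ^ 2 := by
  have hAB : A * B ≤ (A + B + C) ^ 2 := by nlinarith [mul_pos hA hB, mul_pos hA hC, mul_pos hB hC]
  rw [timeDensity, div_le_iff₀ (by positivity)]
  calc (A * B * C) ^ 2 = C ^ 2 * (A * B) ^ 2 := by ring
    _ ≤ C ^ 2 * ((A + B + C) ^ 2) ^ 2 := by gcongr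
    _ = C ^ 2 * (A + B + C) ^ 4 := by ring

namespace IsNormalizedFlow

variable {A B C : ℝ → ℝ}

theorem timeDensity_pos (h : IsNormalizedFlow A B C) (s : ℝ) :
    0 < timeDensity (A s) (B s) (C s) :=
  div_pos (pow_pos (mul_pos (mul_pos (h.A_pos s) (h.B_pos s)) (h.C_pos s)) 2)
    (pow_pos (h.sum_pos s) 4)

theorem continuous_timeDensity (h : IsNormalizedFlow A B C) :
    Continuous fun s => timeDensity (A s) (B s) (C s) := by
  have := h.continuous_A
  have := h.continuous_B
  have := h.continuous_C
  unfold timeDensity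
  exact .div (by fun_prop) (by fun_prop) fun s => (pow_pos (h.sum_pos s) 4).ne'

theorem integrableOn_timeDensity (h : IsNormalizedFlow A B C) :
    IntegrableOn (fun s => timeDensity (A s) (B s) (C s)) (Ioi 0) := by
  have hCsq : (fun s => C s ^ 2) =O[atTop] fun s => Real.exp (-2 * s) :=
    (h.isBigO_exp_neg_C.pow 2).congr_right fun s => by
      rw [← Real.exp_nat_mul]; push_cast; ring_nf
  refine integrable_of_isBigO_exp_neg two_pos h.continuous_timeDensity.continuousOn
    ((IsBigO.of_bound 1 (.of_forall fun s => ?_)).trans hCsq)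
  rw [one_mul, Real.norm_of_nonneg (h.timeDensity_pos s).le, Real.norm_of_nonneg (sq_nonneg _)]
  exact timeDensity_le_sq (h.A_pos s) (h.B_pos s) (h.C_pos s)

variable {t σ : ℝ → ℝ} {T : ℝ}

theorem tendsto_C_sq_div_remaining_time (h : IsNormalizedFlow A B C)
    (ht : IsTimeChange (fun s => timeDensity (A s) (B s) (C s)) t σ T) :
    Tendsto (fun s => C s ^ 2 / (T - t s)) atTop (𝓝 64) := by
  have hlim := (h.tendsto_sl2F1_mul_sl2F2_div.const_mul 4).div (h.tendsto_A_div_B.pow 2)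
    (by norm_num)
  rw [show (4 * 16 / 1 ^ 2 : ℝ) = 64 by norm_num] at hlim
  refine HasDerivAt.lhopital_zero_atTop (.of_forall fun s => (h.hasDerivAt_C s).fun_pow 2)
    (.of_forall fun s => (ht.hasStrictDerivAt s).hasDerivAt.const_sub T)
    (.of_forall fun s => (neg_neg_of_pos (h.timeDensity_pos s)).ne)
    (by simpa using h.tendsto_C.pow 2) (by simpa using ht.tendsto.const_sub T) ?_
  refine hlim.congr fun s => ?_
  have hA := (h.A_pos s).ne'
  have hB := (h.B_pos s).ne'
  have hC := (h.C_pos s).ne'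
  have hS := (h.sum_pos s).ne'
  rw [Pi.div_apply, timeDensity]
  push_cast
  field_simp
  ring

theorem tendsto_C_div_sqrt_remaining_time (h : IsNormalizedFlow A B C)
    (ht : IsTimeChange (fun s => timeDensity (A s) (B s) (C s)) t σ T) :
    Tendsto (fun s => C s / (8 * √(T - t s))) atTop (𝓝 1) := by
  have hlim := (h.tendsto_C_sq_div_remaining_time ht).sqrt.div_const 8
  rw [show √(64 : ℝ) / 8 = 1 by
    rw [show (64 : ℝ) = 8 ^ 2 by norm_num, Real.sqrt_sq (by norm_num)]; norm_num] at hlim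
  refine hlim.congr fun s => ?_
  rw [Real.sqrt_div (sq_nonneg _), Real.sqrt_sq (h.C_pos s).le, div_div, mul_comm]

theorem exists_tendsto_mul_sqrt_remaining_time (h : IsNormalizedFlow A B C)
    (ht : IsTimeChange (fun s => timeDensity (A s) (B s) (C s)) t σ T) :
    ∃ E, 0 < E ∧ Tendsto (fun s => A s * √(T - t s) / E) atTop (𝓝 1) ∧
      Tendsto (fun s => B s * √(T - t s) / E) atTop (𝓝 1) := by
  obtain ⟨L, hL, hAC⟩ := h.exists_tendsto_A_mul_C
  have hA : Tendsto (fun s => A s * √(T - t s) / (L / 8)) atTop (𝓝 1) := by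
    have hlim := (hAC.div_const L).div (h.tendsto_C_div_sqrt_remaining_time ht) one_ne_zero
    rw [div_self hL.ne', div_one] at hlim
    refine hlim.congr fun s => ?_
    have hC := (h.C_pos s).ne'
    simp only [Pi.div_apply]
    field_simp
  have hB := hA.div h.tendsto_A_div_B one_ne_zero
  rw [div_one] at hB
  refine ⟨L / 8, by positivity, hA, hB.congr fun s => ?_⟩
  have hA := (h.A_pos s).ne'
  have hB := (h.B_pos s).ne'
  simp only [Pi.div_apply]
  field_simp

theorem isSolSL2_comp (h : IsNormalizedFlow A B C)
    (ht : IsTimeChange (fun s => timeDensity (A s) (B s) (C s)) t σ T) :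
    IsSolSL2 (A ∘ σ) (B ∘ σ) (C ∘ σ) {τ : ℝ | 0 ≤ τ ∧ (τ : EReal) < T} := by
  rintro τ ⟨hτ0, hτT⟩
  obtain ⟨s, rfl⟩ := ht.Ico_subset_range ⟨hτ0, EReal.coe_lt_coe_iff.1 hτT⟩
  have hA := (h.A_pos s).ne'
  have hB := (h.B_pos s).ne'
  have hC := (h.C_pos s).ne'
  have hS := (h.sum_pos s).ne'
  simp only [Function.comp_apply, ht.leftInverse s]
  refine ⟨⟨h.A_pos s, h.B_pos s, h.C_pos s⟩,
    (ht.hasDerivAt_comp_inv (h.hasDerivAt_A s)).congr_deriv ?_,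
    (ht.hasDerivAt_comp_inv (h.hasDerivAt_B s)).congr_deriv ?_,
    (ht.hasDerivAt_comp_inv (h.hasDerivAt_C s)).congr_deriv ?_⟩ <;>
  · rw [timeDensity]
    field_simp

end IsNormalizedFlow

theorem isMaxSolSL2_of_tendsto_zero {A B C : ℝ → ℝ} {T : ℝ} (hT : 0 < T)
    (hsol : IsSolSL2 A B C {t : ℝ | 0 ≤ t ∧ (t : EReal) < T})
    (hC : Tendsto C (𝓝[<] T) (𝓝 0)) : IsMaxSolSL2 A B C T := by
  refine ⟨hsol, fun A' B' C' T' hTT' hsol' heq => ?_⟩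
  obtain ⟨⟨-, -, hpos⟩, -, -, hderiv⟩ := hsol' T ⟨hT.le, hTT'⟩
  have hlim : Tendsto C' (𝓝[<] T) (𝓝 0) := hC.congr' <| by
    filter_upwards [Ico_mem_nhdsLT hT] with t ht
    exact (heq t ht.1 (EReal.coe_lt_coe_iff.2 ht.2)).2.2.symm
  exact hpos.ne' (tendsto_nhds_unique (hderiv.continuousAt.mono_left nhdsWithin_le_nhds) hlim)

/-- For any initial data `A0, B0, C0 > 0` with `B0 > C0`, the `SL(2,ℝ)` negative cross
curvature flow has a maximal positive solution on a finite interval `[0, T0)`, and as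
`t → T0⁻` one has `C ∼ 8√(T0 - t)` and `A, B ∼ E/√(T0 - t)` for some constant
`E > 0`. -/
theorem sl2_generic_blowup
    (A0 B0 C0 : ℝ) (hA0 : 0 < A0) (hB0 : 0 < B0) (hC0 : 0 < C0) (hB0C0 : B0 > C0) :
    ∃ (T0 : ℝ) (A B C : ℝ → ℝ), 0 < T0 ∧
      A 0 = A0 ∧ B 0 = B0 ∧ C 0 = C0 ∧
      IsMaxSolSL2 A B C (T0 : EReal) ∧
      Filter.Tendsto (fun t => C t / (8 * Real.sqrt (T0 - t)))
        (nhdsWithin T0 (Set.Iio T0)) (nhds 1) ∧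
      ∃ E : ℝ, 0 < E ∧
        Filter.Tendsto (fun t => A t * Real.sqrt (T0 - t) / E)
          (nhdsWithin T0 (Set.Iio T0)) (nhds 1) ∧
        Filter.Tendsto (fun t => B t * Real.sqrt (T0 - t) / E)
          (nhdsWithin T0 (Set.Iio T0)) (nhds 1) := by
  obtain ⟨A, B, C, rfl, rfl, rfl, h⟩ := exists_isNormalizedFlow hA0 hC0 hB0C0
  obtain ⟨t, σ, T, ht⟩ := exists_isTimeChange h.continuous_timeDensity h.timeDensity_pos
    h.integrableOn_timeDensity
  have hmax : IsMaxSolSL2 (A ∘ σ) (B ∘ σ) (C ∘ σ) T :=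
    isMaxSolSL2_of_tendsto_zero ht.terminal_pos (h.isSolSL2_comp ht)
      (h.tendsto_C.comp ht.tendsto_inv)
  obtain ⟨E, hE, hA, hB⟩ := h.exists_tendsto_mul_sqrt_remaining_time ht
  refine ⟨T, A ∘ σ, B ∘ σ, C ∘ σ, ht.terminal_pos, ?_, ?_, ?_, hmax,
    ht.tendsto_comp_inv (f := fun s τ => C s / (8 * √(T - τ)))
      (h.tendsto_C_div_sqrt_remaining_time ht), E, hE,
    ht.tendsto_comp_inv (f := fun s τ => A s * √(T - τ) / E) hA,
    ht.tendsto_comp_inv (f := fun s τ => B s * √(T - τ) / E) hB⟩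
  all_goals rw [Function.comp_apply, ht.inv_zero]
end

section
/- For any initial data A_0 > B_0 > 0, C_0 > 0, the E(2) negative cross curvature flow ODE system has a positive solution on all of [0, ∞), which satisfies B_0 ≤ B(t) < A(t) ≤ A_0 for all t, C is increasing with lim_{t→∞} C(t) = ∞, the quantity (A - B)^2 C is increasing and converges to a finite positive limit as t → ∞, and there exist positive constants E_1, E_2 such that as t → ∞: t^{1/6}(A(t) - E_1) → E_2, t^{1/6}(B(t) - E_1) → -E_2, and C(t)/t^{1/3} → (8 E_2/E_1) sqrt(6). -/
/-- A triple of functions solves the `E(2)` negative cross curvature flow ODE system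
(with positivity) on a set `s ⊆ ℝ`. -/
def IsSolE2 (A B C : ℝ → ℝ) (s : Set ℝ) : Prop :=
  ∀ t ∈ s,
    (0 < A t ∧ 0 < B t ∧ 0 < C t) ∧
    HasDerivAt A
      (-2 * A t * (3 * B t + A t) * (A t - B t) ^ 3 / (A t * B t * C t) ^ 2) t ∧
    HasDerivAt B
      (-2 * B t * (3 * A t + B t) * (B t - A t) ^ 3 / (A t * B t * C t) ^ 2) t ∧
    HasDerivAt C
      (2 * C t * (3 * A t + B t) * (3 * B t + A t) * (A t - B t) ^ 2 /
        (A t * B t * C t) ^ 2) t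

/-!
Put `r = (A - B) / (A + B)` and `σ(r) = (1 - r²)^(1/4)`. Along the flow
`d log (A + B) / dr = r / (2 (1 - r²))` and `d log C / dr = -(4 - r²) / (2 r (1 - r²))`, so that
`E = (A + B) σ(r) / 2` and `K = C r² / σ(r)³` are constant. Hence
`A = E (1 + r) / σ(r)`, `B = E (1 - r) / σ(r)`, `C = K σ(r)³ / r²`,
and the system reduces to the scalar equation `r' = -64 r⁷ / (K² σ(r)¹⁰)`, which is solved for all
`t ≥ 0` by a quadrature in the variable `u = -log r`.

Since `(r⁻⁶)' = 384 / (K² σ(r)¹⁰)` is bounded below, `r → 0`; hence this derivative tends to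
`384 / K²` and `t^(1/6) r → ρ = (K² / 384)^(1/6)`. Expanding at `r = 0` gives `E₁ = E`,
`E₂ = ρ E`, and `C / t^(1/3) → K / ρ² = 8 √6 ρ`, because `384 = (8 √6)²`.
-/

open Filter Set Topology

section Calculus

lemma monotoneOn_of_hasDerivAt_nonneg {f f' : ℝ → ℝ} {s : Set ℝ} (hs : Convex ℝ s)
    (hf : ∀ t ∈ s, HasDerivAt f (f' t) t) (hf' : ∀ t ∈ s, 0 ≤ f' t) : MonotoneOn f s :=
  monotoneOn_of_hasDerivWithinAt_nonneg hs
    (fun t ht => (hf t ht).continuousAt.continuousWithinAt)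
    (fun t ht => (hf t (interior_subset ht)).hasDerivWithinAt)
    (fun t ht => hf' t (interior_subset ht))

lemma tendsto_atTop_of_le_hasDerivAt {f f' : ℝ → ℝ} {a δ : ℝ} (hδ : 0 < δ)
    (hf : ∀ t, a ≤ t → HasDerivAt f (f' t) t) (hf' : ∀ t, a ≤ t → δ ≤ f' t) :
    Tendsto f atTop atTop := by
  have hderiv : ∀ t, a ≤ t → HasDerivAt (fun t => f t - δ * t) (f' t - δ) t := fun t ht => by
    simpa using (hf t ht).fun_sub ((hasDerivAt_id t).const_mul δ)
  have hmono : MonotoneOn (fun t => f t - δ * t) (Ici a) :=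
    monotoneOn_of_hasDerivAt_nonneg (convex_Ici a) hderiv fun t ht => sub_nonneg.2 (hf' t ht)
  have hlinear : Tendsto (fun t => δ * t + (f a - δ * a)) atTop atTop :=
    tendsto_atTop_add_const_right _ _ (tendsto_id.const_mul_atTop hδ)
  refine tendsto_atTop_mono' _ ?_ hlinear
  filter_upwards [eventually_ge_atTop a] with t ht
  linarith [hmono self_mem_Ici ht ht]

lemma surjective_of_le_hasDerivAt {f f' : ℝ → ℝ} {δ : ℝ} (hδ : 0 < δ)
    (hf : ∀ x, HasDerivAt f (f' x) x) (hf' : ∀ x, δ ≤ f' x) : Function.Surjective f := by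
  have hcont : Continuous f := continuous_iff_continuousAt.2 fun x => (hf x).continuousAt
  have htop : Tendsto f atTop atTop :=
    tendsto_atTop_of_le_hasDerivAt (a := 0) hδ (fun x _ => hf x) fun x _ => hf' x
  have hreflected : ∀ x, HasDerivAt (fun x => -f (-x)) (f' (-x)) x := fun x => by
    simpa using ((hf (-x)).scomp x (hasDerivAt_neg x)).fun_neg
  have hbot : Tendsto (fun x => -f (-x)) atTop atTop :=
    tendsto_atTop_of_le_hasDerivAt (a := 0) hδ (fun x _ => hreflected x) fun x _ => hf' (-x)
  refine hcont.surjective htop ?_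
  simpa [Function.comp_def] using
    tendsto_neg_atTop_atBot.comp (hbot.comp tendsto_neg_atBot_atTop)

/-- Separation of variables: the solution is the inverse function of `x ↦ ∫ z in w₀..x, g z`. -/
lemma exists_hasDerivAt_inv_of_continuous {g : ℝ → ℝ} {δ : ℝ} (hg : Continuous g) (hδ : 0 < δ)
    (hgδ : ∀ z, δ ≤ g z) (w₀ : ℝ) :
    ∃ w : ℝ → ℝ, w 0 = w₀ ∧ ∀ t, HasDerivAt w (g (w t))⁻¹ t := by
  set G : ℝ → ℝ := fun x => ∫ z in w₀..x, g z
  have hG : ∀ x, HasDerivAt G (g x) x := fun x => hg.integral_hasStrictDerivAt w₀ x |>.hasDerivAt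
  have hpos : ∀ z, 0 < g z := fun z => hδ.trans_le (hgδ z)
  let e : ℝ ≃o ℝ := (strictMono_of_hasDerivAt_pos hG hpos).orderIsoOfSurjective G
    (surjective_of_le_hasDerivAt hδ hG hgδ)
  have hGw₀ : e w₀ = 0 := intervalIntegral.integral_same
  refine ⟨e.symm, by rw [← hGw₀, e.symm_apply_apply], fun t => ?_⟩
  exact .of_local_left_inverse e.symm.continuous.continuousAt (hG _) (hpos _).ne'
    (.of_forall e.apply_symm_apply)

lemma exists_hasDerivAt_inv_of_continuousOn_Ici {g : ℝ → ℝ} {δ w₀ : ℝ}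
    (hg : ContinuousOn g (Ici w₀)) (hδ : 0 < δ) (hgδ : ∀ z, w₀ ≤ z → δ ≤ g z) :
    ∃ w : ℝ → ℝ, w 0 = w₀ ∧ ∀ t, 0 ≤ t → w₀ ≤ w t ∧ HasDerivAt w (g (w t))⁻¹ t := by
  have hcont : Continuous fun z => g (max z w₀) :=
    hg.comp_continuous (continuous_id.max continuous_const) fun z => le_max_right z w₀
  obtain ⟨w, hw0, hw⟩ := exists_hasDerivAt_inv_of_continuous hcont hδ
    (fun z => hgδ _ (le_max_right z w₀)) w₀
  have hmono : Monotone w := monotone_of_hasDerivAt_nonneg hw fun t =>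
    inv_nonneg.2 (hδ.le.trans (hgδ _ (le_max_right _ _)))
  refine ⟨w, hw0, fun t ht => ?_⟩
  have hle : w₀ ≤ w t := hw0 ▸ hmono ht
  exact ⟨hle, by simpa only [max_eq_left hle] using hw t⟩

section NormedSpace

variable {F : Type*} [NormedAddCommGroup F] [NormedSpace ℝ F] {f f' : ℝ → F}

lemma isLittleO_id_of_tendsto_hasDerivAt_zero (hf : ∀ᶠ t in atTop, HasDerivAt f (f' t) t)
    (hf' : Tendsto f' atTop (𝓝 0)) : f =o[atTop] (id : ℝ → ℝ) := by
  refine Asymptotics.isLittleO_iff.2 fun ε hε => ?_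
  have hsmall : ∀ᶠ t in atTop, ‖f' t‖ ≤ ε / 2 :=
    (tendsto_zero_iff_norm_tendsto_zero.1 hf').eventually_le_const (half_pos hε)
  obtain ⟨T, hT⟩ := eventually_atTop.1 (hf.and (hsmall.and (eventually_ge_atTop 0)))
  filter_upwards [eventually_ge_atTop T, eventually_ge_atTop (‖f T‖ / (ε / 2))] with t hTt hlarge
  have hT0 : 0 ≤ T := (hT T le_rfl).2.2
  calc ‖f t‖ ≤ ‖f t - f T‖ + ‖f T‖ := by simpa using norm_add_le (f t - f T) (f T)
    _ ≤ ε / 2 * ‖t - T‖ + ε / 2 * t := by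
      gcongr
      · exact (convex_Ici T).norm_image_sub_le_of_norm_hasDerivWithin_le
          (fun x hx => (hT x hx).1.hasDerivWithinAt) (fun x hx => (hT x hx).2.1) self_mem_Ici hTt
      · exact (div_le_iff₀' (half_pos hε)).1 hlarge
    _ ≤ ε * ‖id t‖ := by
      rw [id, Real.norm_of_nonneg (sub_nonneg.2 hTt), Real.norm_of_nonneg (hT0.trans hTt)]
      nlinarith

lemma tendsto_inv_smul_of_tendsto_hasDerivAt {c : F} (hf : ∀ᶠ t in atTop, HasDerivAt f (f' t) t)
    (hf' : Tendsto f' atTop (𝓝 c)) : Tendsto (fun t => t⁻¹ • f t) atTop (𝓝 c) := by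
  have hderiv : ∀ᶠ t in atTop, HasDerivAt (fun t => f t - t • c) (f' t - c) t := by
    filter_upwards [hf] with t ht
    simpa using ht.fun_sub ((hasDerivAt_id t).smul_const c)
  have hsmall : (fun t => f t - t • c) =o[atTop] (id : ℝ → ℝ) :=
    isLittleO_id_of_tendsto_hasDerivAt_zero hderiv (by simpa using hf'.sub_const c)
  have hlim := hsmall.tendsto_inv_smul_nhds_zero.add_const c
  rw [zero_add] at hlim
  refine hlim.congr' ?_
  filter_upwards [eventually_ne_atTop 0] with t ht
  rw [id, smul_sub, inv_smul_smul₀ ht, sub_add_cancel]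

end NormedSpace

lemma tendsto_mul_sub_of_hasDerivAt {𝕜 α : Type*} [NontriviallyNormedField 𝕜] {l : Filter α}
    {φ : 𝕜 → 𝕜} {d a ρ : 𝕜} {r s : α → 𝕜} (hφ : HasDerivAt φ d a) (hr : Tendsto r l (𝓝 a))
    (hs : Tendsto (fun t => s t * (r t - a)) l (𝓝 ρ)) :
    Tendsto (fun t => s t * (φ (r t) - φ a)) l (𝓝 (ρ * d)) := by
  have hslope : Tendsto (fun t => dslope φ a (r t)) l (𝓝 d) := by
    have hcont := continuousAt_dslope_same.2 hφ.differentiableAt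
    rw [ContinuousAt, dslope_same, hφ.deriv] at hcont
    exact hcont.comp hr
  refine (hs.mul hslope).congr fun t => ?_
  rw [mul_assoc, ← smul_eq_mul (r t - a), sub_smul_dslope]

end Calculus

namespace IsSolE2

variable {A B C : ℝ → ℝ} {s : Set ℝ}

lemma antitoneOn_A (h : IsSolE2 A B C s) (hs : Convex ℝ s) (hBA : ∀ t ∈ s, B t ≤ A t) :
    AntitoneOn A s := by
  suffices hneg : MonotoneOn (-A) s by simpa using hneg.neg
  refine monotoneOn_of_hasDerivAt_nonneg hs (fun t ht => (h t ht).2.1.neg) fun t ht => ?_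
  obtain ⟨⟨hA, hB, -⟩, -⟩ := h t ht
  have hsub := sub_nonneg.2 (hBA t ht)
  have hnum : 0 ≤ 2 * A t * (3 * B t + A t) * (A t - B t) ^ 3 := by positivity
  exact neg_nonneg.2 (div_nonpos_of_nonpos_of_nonneg (by linarith) (sq_nonneg _))

lemma monotoneOn_B (h : IsSolE2 A B C s) (hs : Convex ℝ s) (hBA : ∀ t ∈ s, B t ≤ A t) :
    MonotoneOn B s := by
  refine monotoneOn_of_hasDerivAt_nonneg hs (fun t ht => (h t ht).2.2.1) fun t ht => ?_
  obtain ⟨⟨hA, hB, -⟩, -⟩ := h t ht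
  have hsub := sub_nonneg.2 (hBA t ht)
  have hnum : 0 ≤ 2 * B t * (3 * A t + B t) * (A t - B t) ^ 3 := by positivity
  exact div_nonneg (by linear_combination hnum) (sq_nonneg _)

lemma monotoneOn_C (h : IsSolE2 A B C s) (hs : Convex ℝ s) : MonotoneOn C s := by
  refine monotoneOn_of_hasDerivAt_nonneg hs (fun t ht => (h t ht).2.2.2) fun t ht => ?_
  obtain ⟨⟨hA, hB, hC⟩, -⟩ := h t ht
  positivity

lemma hasDerivAt_sub_sq_mul (h : IsSolE2 A B C s) {t : ℝ} (ht : t ∈ s) :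
    HasDerivAt (fun t => (A t - B t) ^ 2 * C t)
      (2 * (A t - B t) ^ 6 * C t / (A t * B t * C t) ^ 2) t := by
  obtain ⟨⟨hA, hB, hC⟩, hA', hB', hC'⟩ := h t ht
  refine (((hA'.fun_sub hB').fun_pow 2).fun_mul hC').congr_deriv ?_
  field_simp
  ring

lemma monotoneOn_sub_sq_mul (h : IsSolE2 A B C s) (hs : Convex ℝ s) :
    MonotoneOn (fun t => (A t - B t) ^ 2 * C t) s := by
  refine monotoneOn_of_hasDerivAt_nonneg hs (fun t ht => h.hasDerivAt_sub_sq_mul ht)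
    fun t ht => ?_
  have hC := (h t ht).1.2.2
  positivity

end IsSolE2

section RatioFlow

/-- The function `σ(x) = (1 - x²)^(1/4)`, through which the metric coefficients depend on the
ratio `x = (A - B) / (A + B)`; it is meaningful for `|x| ≤ 1`. -/
noncomputable def fourthRootOneSubSq (x : ℝ) : ℝ := (1 - x ^ 2) ^ ((4 : ℕ)⁻¹ : ℝ)

local notation "σ" => fourthRootOneSubSq

lemma fourthRootOneSubSq_pos {x : ℝ} (hx : x ^ 2 < 1) : 0 < σ x :=
  Real.rpow_pos_of_pos (sub_pos.2 hx) _

lemma fourthRootOneSubSq_pow_four {x : ℝ} (hx : x ^ 2 ≤ 1) : σ x ^ 4 = 1 - x ^ 2 :=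
  Real.rpow_inv_natCast_pow (sub_nonneg.2 hx) four_ne_zero

lemma fourthRootOneSubSq_zero : σ 0 = 1 := by simp [fourthRootOneSubSq]

lemma fourthRootOneSubSq_neg (x : ℝ) : σ (-x) = σ x := by simp [fourthRootOneSubSq]

lemma fourthRootOneSubSq_le_of_sq_le {x y : ℝ} (hxy : x ^ 2 ≤ y ^ 2) (hy : y ^ 2 ≤ 1) :
    σ y ≤ σ x :=
  Real.rpow_le_rpow (by linarith) (by linarith) (by norm_num)

lemma fourthRootOneSubSq_le_one {x : ℝ} (hx : x ^ 2 ≤ 1) : σ x ≤ 1 :=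
  fourthRootOneSubSq_zero ▸ fourthRootOneSubSq_le_of_sq_le (by simpa using sq_nonneg x) hx

lemma continuous_fourthRootOneSubSq : Continuous σ :=
  (continuous_const.sub (continuous_pow 2)).rpow_const fun _ => Or.inr (by positivity)

lemma hasDerivAt_fourthRootOneSubSq {x : ℝ} (hx : x ^ 2 < 1) :
    HasDerivAt σ (-x / (2 * σ x ^ 3)) x := by
  have hbase : HasDerivAt (fun x : ℝ => 1 - x ^ 2) (-(2 * x)) x := by
    simpa using (hasDerivAt_pow 2 x).const_sub 1
  have hroot : HasDerivAt σ _ x := hbase.rpow_const (Or.inl (sub_pos.2 hx).ne')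
  refine hroot.congr_deriv ?_
  have hσ := fourthRootOneSubSq_pos hx
  rw [Real.rpow_sub_one (sub_pos.2 hx).ne', ← fourthRootOneSubSq.eq_1,
    ← fourthRootOneSubSq_pow_four hx.le]
  push_cast
  field_simp
  ring

/-- The coefficient `A` of a solution as a function of the ratio `x = (A - B) / (A + B)`, where
`E` is the value of the first integral `(A + B) σ / 2`. As exchanging `A` and `B` changes the sign
of `x`, the coefficient `B` is `coeffA E (-x)`. -/
noncomputable def coeffA (E x : ℝ) : ℝ := E * (1 + x) / σ x

/-- The coefficient `C` of a solution as a function of the ratio `x = (A - B) / (A + B)`, where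
`K` is the value of the first integral `C x² / σ³`. -/
noncomputable def coeffC (K x : ℝ) : ℝ := K * σ x ^ 3 / x ^ 2

/-- The velocity of the ratio `x = (A - B) / (A + B)` along the flow, where `K` is the value of the
first integral `C x² / σ³`. -/
noncomputable def ratioVelocity (K x : ℝ) : ℝ := -64 * x ^ 7 / (K ^ 2 * σ x ^ 10)

/-- The scalar equation on a set `s` of times to which the `E(2)` flow with `A > B` reduces. -/
structure IsRatioFlow (K : ℝ) (r : ℝ → ℝ) (s : Set ℝ) : Prop where
  mem_Ioo : ∀ t ∈ s, r t ∈ Ioo 0 1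
  hasDerivAt : ∀ t ∈ s, HasDerivAt r (ratioVelocity K (r t)) t

variable {E K x : ℝ}

lemma sq_lt_one_of_mem_Ioo (hx : x ∈ Ioo 0 1) : x ^ 2 < 1 :=
  pow_lt_one₀ hx.1.le hx.2 two_ne_zero

lemma coeffA_sub_coeffA_neg : coeffA E x - coeffA E (-x) = 2 * E * x / σ x := by
  rw [coeffA, coeffA, fourthRootOneSubSq_neg]
  ring

lemma coeffA_neg_lt_coeffA (hE : 0 < E) (hx : x ∈ Ioo 0 1) : coeffA E (-x) < coeffA E x := by
  have hσ := fourthRootOneSubSq_pos (sq_lt_one_of_mem_Ioo hx)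
  have hx0 := hx.1
  rw [← sub_pos, coeffA_sub_coeffA_neg]
  positivity

lemma coeffC_neg : coeffC K (-x) = coeffC K x := by
  rw [coeffC, coeffC, fourthRootOneSubSq_neg, neg_sq]

lemma ratioVelocity_neg : ratioVelocity K (-x) = -ratioVelocity K x := by
  rw [ratioVelocity, ratioVelocity, fourthRootOneSubSq_neg]
  ring

lemma coeffA_sub_sq_mul_coeffC (hx0 : x ≠ 0) (hx1 : x ^ 2 < 1) :
    (coeffA E x - coeffA E (-x)) ^ 2 * coeffC K x = 4 * E ^ 2 * K * σ x := by
  have hσ := fourthRootOneSubSq_pos hx1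
  rw [coeffA_sub_coeffA_neg, coeffC]
  field_simp
  ring

lemma coeffA_mul_coeffA_neg (hx : x ^ 2 < 1) : coeffA E x * coeffA E (-x) = E ^ 2 * σ x ^ 2 := by
  have hσ := fourthRootOneSubSq_pos hx
  have hσ4 := fourthRootOneSubSq_pow_four hx.le
  rw [coeffA, coeffA, fourthRootOneSubSq_neg]
  field_simp
  linear_combination -E ^ 2 * hσ4

lemma hasDerivAt_coeffA (hx : x ^ 2 < 1) :
    HasDerivAt (coeffA E) (coeffA E x * (2 - x) / (2 * σ x ^ 4)) x := by
  have hσ := fourthRootOneSubSq_pos hx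
  have hσ4 := fourthRootOneSubSq_pow_four hx.le
  have hnum : HasDerivAt (fun x => E * (1 + x)) E x := by
    simpa using ((hasDerivAt_id x).const_add 1).const_mul E
  refine (hnum.fun_div (hasDerivAt_fourthRootOneSubSq hx) hσ.ne').congr_deriv ?_
  rw [coeffA]
  field_simp
  linear_combination 2 * E * hσ4

lemma coeffA_zero : coeffA E 0 = E := by
  rw [coeffA, fourthRootOneSubSq_zero, add_zero, mul_one, div_one]

lemma hasDerivAt_coeffA_zero : HasDerivAt (coeffA E) E 0 :=
  (hasDerivAt_coeffA (by norm_num)).congr_deriv (by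
    rw [coeffA_zero, fourthRootOneSubSq_zero]
    ring)

lemma hasDerivAt_coeffC (hx0 : x ≠ 0) (hx1 : x ^ 2 < 1) :
    HasDerivAt (coeffC K) (-coeffC K x * (4 - x ^ 2) / (2 * x * σ x ^ 4)) x := by
  have hσ := fourthRootOneSubSq_pos hx1
  have hσ4 := fourthRootOneSubSq_pow_four hx1.le
  have hnum := ((hasDerivAt_fourthRootOneSubSq hx1).fun_pow 3).const_mul K
  refine (hnum.fun_div (hasDerivAt_pow 2 x) (pow_ne_zero 2 hx0)).congr_deriv ?_
  rw [coeffC]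
  field_simp
  push_cast
  linear_combination (-4 * K * x * σ x ^ 2) * hσ4

lemma hasDerivAt_coeffA_comp {r : ℝ → ℝ} {t : ℝ} (hE : E ≠ 0)
    (hr0 : r t ≠ 0) (hr1 : r t ^ 2 < 1) (hr : HasDerivAt r (ratioVelocity K (r t)) t) :
    HasDerivAt (fun t => coeffA E (r t))
      (-2 * coeffA E (r t) * (3 * coeffA E (-r t) + coeffA E (r t)) *
        (coeffA E (r t) - coeffA E (-r t)) ^ 3 /
          (coeffA E (r t) * coeffA E (-r t) * coeffC K (r t)) ^ 2) t := by
  have hσ := fourthRootOneSubSq_pos hr1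
  have hsum : 3 * coeffA E (-r t) + coeffA E (r t) = 2 * E * (2 - r t) / σ (r t) := by
    rw [coeffA, coeffA, fourthRootOneSubSq_neg]
    ring
  refine ((hasDerivAt_coeffA hr1).comp t hr).congr_deriv ?_
  rw [coeffA_mul_coeffA_neg hr1, coeffA_sub_coeffA_neg, hsum, coeffC, ratioVelocity]
  field_simp
  ring

lemma hasDerivAt_coeffC_comp {r : ℝ → ℝ} {t : ℝ} (hE : E ≠ 0)
    (hr0 : r t ≠ 0) (hr1 : r t ^ 2 < 1) (hr : HasDerivAt r (ratioVelocity K (r t)) t) :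
    HasDerivAt (fun t => coeffC K (r t))
      (2 * coeffC K (r t) * (3 * coeffA E (r t) + coeffA E (-r t)) *
        (3 * coeffA E (-r t) + coeffA E (r t)) * (coeffA E (r t) - coeffA E (-r t)) ^ 2 /
          (coeffA E (r t) * coeffA E (-r t) * coeffC K (r t)) ^ 2) t := by
  have hσ := fourthRootOneSubSq_pos hr1
  have hsums : (3 * coeffA E (r t) + coeffA E (-r t)) * (3 * coeffA E (-r t) + coeffA E (r t)) =
      4 * E ^ 2 * (4 - r t ^ 2) / σ (r t) ^ 2 := by
    rw [coeffA, coeffA, fourthRootOneSubSq_neg]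
    ring
  refine ((hasDerivAt_coeffC hr0 hr1).comp t hr).congr_deriv ?_
  rw [coeffA_mul_coeffA_neg hr1, coeffA_sub_coeffA_neg, mul_assoc (2 * _), hsums, coeffC,
    ratioVelocity]
  field_simp
  ring

lemma IsRatioFlow.isSolE2 {r : ℝ → ℝ} {s : Set ℝ} (hr : IsRatioFlow K r s) (hE : 0 < E)
    (hK : 0 < K) :
    IsSolE2 (fun t => coeffA E (r t)) (fun t => coeffA E (-r t)) (fun t => coeffC K (r t)) s := by
  intro t ht
  obtain ⟨hr0, hr1⟩ := hr.mem_Ioo t ht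
  have hr2 := sq_lt_one_of_mem_Ioo (hr.mem_Ioo t ht)
  have hσ := fourthRootOneSubSq_pos hr2
  have hσ' := fourthRootOneSubSq_pos ((neg_sq (r t)).trans_lt hr2)
  have hsub : 0 < 1 + -r t := by linarith
  refine ⟨⟨?_, ?_, ?_⟩, hasDerivAt_coeffA_comp hE.ne' hr0.ne' hr2 (hr.hasDerivAt t ht), ?_,
    hasDerivAt_coeffC_comp hE.ne' hr0.ne' hr2 (hr.hasDerivAt t ht)⟩
  · unfold coeffA; positivity
  · unfold coeffA; positivity
  · unfold coeffC; positivity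
  -- The system is invariant under `A ↔ B`, that is, under `r ↦ -r`.
  · have hneg : HasDerivAt (fun t => -r t) (ratioVelocity K (-r t)) t := by
      rw [ratioVelocity_neg]
      exact (hr.hasDerivAt t ht).fun_neg
    have hB := hasDerivAt_coeffA_comp (r := fun t => -r t) hE.ne' (neg_ne_zero.2 hr0.ne')
      ((neg_sq (r t)).trans_lt hr2) hneg
    simpa only [neg_neg, coeffC_neg, mul_comm (coeffA E (-r t)) (coeffA E (r t))] using hB

lemma exists_isRatioFlow {r₀ : ℝ} (hr₀ : r₀ ∈ Ioo 0 1) (hK : K ≠ 0) :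
    ∃ r : ℝ → ℝ, r 0 = r₀ ∧ IsRatioFlow K r (Ici 0) := by
  have hσ₀ := fourthRootOneSubSq_pos (sq_lt_one_of_mem_Ioo hr₀)
  have hexp_le : ∀ u, -Real.log r₀ ≤ u → Real.exp (-u) ≤ r₀ := fun u hu =>
    (Real.le_log_iff_exp_le hr₀.1).1 (by linarith)
  have hmem : ∀ u, -Real.log r₀ ≤ u → Real.exp (-u) ∈ Ioo 0 1 := fun u hu =>
    ⟨Real.exp_pos _, (hexp_le u hu).trans_lt hr₀.2⟩
  -- The equation for `u = -log r` is `u' = (g u)⁻¹`.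
  set g : ℝ → ℝ := fun u => K ^ 2 * σ (Real.exp (-u)) ^ 10 / (64 * Real.exp (-u) ^ 6)
  have hg : Continuous g := by
    have := continuous_fourthRootOneSubSq
    exact Continuous.div (by fun_prop) (by fun_prop) fun u => by positivity
  have hg_ge : ∀ u, -Real.log r₀ ≤ u → K ^ 2 * σ r₀ ^ 10 / (64 * 1 ^ 6) ≤ g u := fun u hu => by
    have hx := hmem u hu
    have hσ := fourthRootOneSubSq_le_of_sq_le (pow_le_pow_left₀ hx.1.le (hexp_le u hu) 2)
      (sq_lt_one_of_mem_Ioo hr₀).le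
    have hx1 := hx.2.le
    simp only [g]
    gcongr
  obtain ⟨u, hu0, hu⟩ :=
    exists_hasDerivAt_inv_of_continuousOn_Ici hg.continuousOn (by positivity) hg_ge
  refine ⟨fun t => Real.exp (-u t), ?_, ⟨fun t ht => hmem _ (hu t ht).1, fun t ht => ?_⟩⟩
  · simp only [hu0, neg_neg, Real.exp_log hr₀.1]
  · have hσ := fourthRootOneSubSq_pos (sq_lt_one_of_mem_Ioo (hmem _ (hu t ht).1))
    refine (hu t ht).2.fun_neg.exp.congr_deriv ?_
    simp only [g, ratioVelocity]
    field_simp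

/-- The limit of `t^(1/6) r(t)` for a solution `r` of the ratio equation. -/
noncomputable def decayConstant (K : ℝ) : ℝ := (K ^ 2 / 384) ^ ((1 : ℝ) / 6)

lemma decayConstant_pos (hK : K ≠ 0) : 0 < decayConstant K :=
  Real.rpow_pos_of_pos (by positivity) _

lemma eq_sqrt_six_mul_decayConstant_pow (hK : 0 ≤ K) : K = 8 * √6 * decayConstant K ^ 3 := by
  have hpow : decayConstant K ^ 3 = √(K ^ 2 / 384) := by
    rw [decayConstant, ← Real.rpow_natCast, ← Real.rpow_mul (by positivity), Real.sqrt_eq_rpow]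
    norm_num
  rw [hpow, Real.sqrt_div (sq_nonneg K), Real.sqrt_sq hK,
    show (384 : ℝ) = 8 ^ 2 * 6 by norm_num, Real.sqrt_mul (by norm_num), Real.sqrt_sq (by norm_num)]
  field_simp

namespace IsRatioFlow

variable {r : ℝ → ℝ}

lemma hasDerivAt_inv_pow_six {s : Set ℝ} (hr : IsRatioFlow K r s) {t : ℝ} (ht : t ∈ s) :
    HasDerivAt (fun t => (r t ^ 6)⁻¹) (384 / (K ^ 2 * σ (r t) ^ 10)) t := by
  have hr0 := (hr.mem_Ioo t ht).1
  refine (((hr.hasDerivAt t ht).fun_pow 6).fun_inv (by positivity)).congr_deriv ?_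
  rw [ratioVelocity]
  field_simp
  ring

lemma eventually_mem_Ioo (hr : IsRatioFlow K r (Ici 0)) : ∀ᶠ t in atTop, r t ∈ Ioo 0 1 :=
  (eventually_ge_atTop 0).mono hr.mem_Ioo

lemma tendsto_zero (hr : IsRatioFlow K r (Ici 0)) (hK : K ≠ 0) : Tendsto r atTop (𝓝 0) := by
  have hinv : Tendsto (fun t => (r t ^ 6)⁻¹) atTop atTop := by
    refine tendsto_atTop_of_le_hasDerivAt (δ := 384 / (K ^ 2 * 1 ^ 10)) (by positivity)
      (fun t ht => hr.hasDerivAt_inv_pow_six ht) fun t ht => ?_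
    have hr2 := sq_lt_one_of_mem_Ioo (hr.mem_Ioo t ht)
    have hσ := fourthRootOneSubSq_pos hr2
    have hσ1 := fourthRootOneSubSq_le_one hr2.le
    gcongr
  have hroot : Tendsto (fun t => (r t ^ 6) ^ ((6 : ℕ)⁻¹ : ℝ)) atTop (𝓝 0) := by
    have hpow : Tendsto (fun t => r t ^ 6) atTop (𝓝 0) := by
      simpa only [Function.comp_def, inv_inv] using tendsto_inv_atTop_zero.comp hinv
    simpa using hpow.rpow_const (p := ((6 : ℕ)⁻¹ : ℝ)) (Or.inr (by positivity))
  refine hroot.congr' ?_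
  filter_upwards [hr.eventually_mem_Ioo] with t ht
  exact Real.pow_rpow_inv_natCast ht.1.le (by norm_num)

lemma tendsto_fourthRootOneSubSq (hr : IsRatioFlow K r (Ici 0)) (hK : K ≠ 0) :
    Tendsto (fun t => σ (r t)) atTop (𝓝 1) :=
  fourthRootOneSubSq_zero ▸ (continuous_fourthRootOneSubSq.tendsto 0).comp (hr.tendsto_zero hK)

lemma tendsto_mul_pow_six (hr : IsRatioFlow K r (Ici 0)) (hK : K ≠ 0) :
    Tendsto (fun t => t * r t ^ 6) atTop (𝓝 (K ^ 2 / 384)) := by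
  have hvelocity : Tendsto (fun t => 384 / (K ^ 2 * σ (r t) ^ 10)) atTop (𝓝 (384 / K ^ 2)) := by
    have hden := ((hr.tendsto_fourthRootOneSubSq hK).pow 10).const_mul (K ^ 2)
    rw [one_pow, mul_one] at hden
    exact tendsto_const_nhds.div hden (by positivity)
  have hlinear := tendsto_inv_smul_of_tendsto_hasDerivAt
    ((eventually_ge_atTop 0).mono fun t ht => hr.hasDerivAt_inv_pow_six ht) hvelocity
  simpa only [smul_eq_mul, mul_inv, inv_inv, inv_div] using hlinear.inv₀ (by positivity)

lemma tendsto_rpow_mul (hr : IsRatioFlow K r (Ici 0)) (hK : K ≠ 0) :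
    Tendsto (fun t : ℝ => t ^ ((1 : ℝ) / 6) * r t) atTop (𝓝 (decayConstant K)) := by
  refine ((hr.tendsto_mul_pow_six hK).rpow_const (p := 1 / 6) (Or.inr (by norm_num))).congr' ?_
  filter_upwards [eventually_ge_atTop 0, hr.eventually_mem_Ioo] with t ht hrt
  have hroot : (r t ^ 6) ^ ((1 : ℝ) / 6) = r t := by
    simpa using Real.pow_rpow_inv_natCast hrt.1.le (n := 6) (by norm_num)
  rw [Real.mul_rpow ht (by have := hrt.1; positivity), hroot]

lemma tendsto_rpow_mul_coeffA_sub (hr : IsRatioFlow K r (Ici 0)) (hK : K ≠ 0) :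
    Tendsto (fun t : ℝ => t ^ ((1 : ℝ) / 6) * (coeffA E (r t) - E)) atTop
      (𝓝 (decayConstant K * E)) := by
  simpa only [coeffA_zero] using
    tendsto_mul_sub_of_hasDerivAt hasDerivAt_coeffA_zero (hr.tendsto_zero hK)
      (by simpa only [sub_zero] using hr.tendsto_rpow_mul hK)

lemma tendsto_rpow_mul_coeffA_neg_sub (hr : IsRatioFlow K r (Ici 0)) (hK : K ≠ 0) :
    Tendsto (fun t : ℝ => t ^ ((1 : ℝ) / 6) * (coeffA E (-r t) - E)) atTop
      (𝓝 (-(decayConstant K * E))) := by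
  rw [← neg_mul]
  simpa only [coeffA_zero] using
    tendsto_mul_sub_of_hasDerivAt (hasDerivAt_coeffA_zero (E := E))
      (by simpa only [neg_zero] using (hr.tendsto_zero hK).neg)
      (by simpa only [sub_zero, mul_neg] using (hr.tendsto_rpow_mul hK).neg)

lemma tendsto_coeffC_div_rpow (hr : IsRatioFlow K r (Ici 0)) (hK : 0 < K) :
    Tendsto (fun t : ℝ => coeffC K (r t) / t ^ ((1 : ℝ) / 3)) atTop
      (𝓝 (8 * √6 * decayConstant K)) := by
  have hρ := decayConstant_pos hK.ne'
  have hlim := (((hr.tendsto_fourthRootOneSubSq hK.ne').pow 3).const_mul K).div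
    ((hr.tendsto_rpow_mul hK.ne').pow 2) (by positivity)
  have hlimit : K * 1 ^ 3 / decayConstant K ^ 2 = 8 * √6 * decayConstant K := by
    rw [div_eq_iff (by positivity)]
    linear_combination eq_sqrt_six_mul_decayConstant_pow hK.le
  rw [hlimit] at hlim
  refine hlim.congr' ?_
  filter_upwards [eventually_ge_atTop 0] with t ht
  have hsq : (t ^ ((1 : ℝ) / 6)) ^ 2 = t ^ ((1 : ℝ) / 3) := by
    rw [← Real.rpow_natCast, ← Real.rpow_mul ht]
    norm_num
  rw [Pi.div_apply, mul_pow, hsq, coeffC, div_div, mul_comm (r t ^ 2)]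

lemma tendsto_coeffC_atTop (hr : IsRatioFlow K r (Ici 0)) (hK : 0 < K) :
    Tendsto (fun t => coeffC K (r t)) atTop atTop := by
  have hρ := decayConstant_pos hK.ne'
  have hrpow : Tendsto (fun t : ℝ => t ^ ((1 : ℝ) / 3)) atTop atTop :=
    tendsto_rpow_atTop (by norm_num)
  refine (hrpow.atTop_mul_pos (by positivity) (hr.tendsto_coeffC_div_rpow hK)).congr' ?_
  filter_upwards [eventually_gt_atTop 0] with t ht
  exact mul_div_cancel₀ _ (by positivity)

lemma tendsto_coeffA_sub_sq_mul_coeffC (hr : IsRatioFlow K r (Ici 0)) (hK : K ≠ 0) :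
    Tendsto (fun t => (coeffA E (r t) - coeffA E (-r t)) ^ 2 * coeffC K (r t)) atTop
      (𝓝 (4 * E ^ 2 * K)) := by
  have hlim := (hr.tendsto_fourthRootOneSubSq hK).const_mul (4 * E ^ 2 * K)
  rw [mul_one] at hlim
  refine hlim.congr' ?_
  filter_upwards [hr.eventually_mem_Ioo] with t ht
  exact (coeffA_sub_sq_mul_coeffC ht.1.ne' (sq_lt_one_of_mem_Ioo ht)).symm

end IsRatioFlow

lemma exists_coeffA_eq_coeffC_eq {a b c : ℝ} (hb : 0 < b) (hab : b < a) (hc : 0 < c) :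
    ∃ E K x : ℝ, 0 < E ∧ 0 < K ∧ x ∈ Ioo 0 1 ∧
      coeffA E x = a ∧ coeffA E (-x) = b ∧ coeffC K x = c := by
  set x := (a - b) / (a + b)
  have hsum : 0 < a + b := by linarith
  have hx : x ∈ Ioo 0 1 :=
    ⟨div_pos (sub_pos.2 hab) hsum, (div_lt_one hsum).2 (by linarith)⟩
  have hx0 := hx.1
  have hσ := fourthRootOneSubSq_pos (sq_lt_one_of_mem_Ioo hx)
  have hratio : (a + b) * x = a - b := mul_div_cancel₀ _ hsum.ne'
  refine ⟨(a + b) * σ x / 2, c * x ^ 2 / σ x ^ 3, x, by positivity, by positivity, hx, ?_, ?_, ?_⟩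
  · rw [coeffA]
    field_simp
    linarith
  · rw [coeffA, fourthRootOneSubSq_neg]
    field_simp
    linarith
  · rw [coeffC]
    field_simp

end RatioFlow

/-- For any initial data `A0 > B0 > 0`, `C0 > 0`, the `E(2)` negative cross curvature
flow has a positive solution on all of `[0, ∞)` with `B0 ≤ B < A ≤ A0`, `C` increasing
to `∞`, `(A - B)²C` increasing to a finite positive limit, and the asymptotics
`A ∼ E1 + E2 t^{-1/6}`, `B ∼ E1 - E2 t^{-1/6}`, `C ∼ (8E2/E1)√6 · t^{1/3}` as `t → ∞`
for some positive constants `E1, E2`. -/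
theorem e2_global_asymptotics
    (A0 B0 C0 : ℝ) (hB0 : 0 < B0) (hA0B0 : A0 > B0) (hC0 : 0 < C0) :
    ∃ A B C : ℝ → ℝ,
      A 0 = A0 ∧ B 0 = B0 ∧ C 0 = C0 ∧
      IsSolE2 A B C (Set.Ici (0 : ℝ)) ∧
      (∀ t : ℝ, 0 ≤ t → B0 ≤ B t ∧ B t < A t ∧ A t ≤ A0) ∧
      MonotoneOn C (Set.Ici (0 : ℝ)) ∧
      Filter.Tendsto C Filter.atTop Filter.atTop ∧
      MonotoneOn (fun t => (A t - B t) ^ 2 * C t) (Set.Ici (0 : ℝ)) ∧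
      (∃ L : ℝ, 0 < L ∧
        Filter.Tendsto (fun t => (A t - B t) ^ 2 * C t) Filter.atTop (nhds L)) ∧
      ∃ E1 E2 : ℝ, 0 < E1 ∧ 0 < E2 ∧
        Filter.Tendsto (fun t : ℝ => t ^ ((1 : ℝ) / 6) * (A t - E1))
          Filter.atTop (nhds E2) ∧
        Filter.Tendsto (fun t : ℝ => t ^ ((1 : ℝ) / 6) * (B t - E1))
          Filter.atTop (nhds (-E2)) ∧
        Filter.Tendsto (fun t : ℝ => C t / t ^ ((1 : ℝ) / 3))
          Filter.atTop (nhds (8 * E2 / E1 * Real.sqrt 6)) := by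
  obtain ⟨E, K, r₀, hE, hK, hr₀, rfl, rfl, rfl⟩ := exists_coeffA_eq_coeffC_eq hB0 hA0B0 hC0
  obtain ⟨r, rfl, hr⟩ := exists_isRatioFlow hr₀ hK.ne'
  have hsol := hr.isSolE2 hE hK
  have hlt : ∀ t ∈ Ici (0 : ℝ), coeffA E (-r t) < coeffA E (r t) := fun t ht =>
    coeffA_neg_lt_coeffA hE (hr.mem_Ioo t ht)
  have hA := hsol.antitoneOn_A (convex_Ici 0) fun t ht => (hlt t ht).le
  have hB := hsol.monotoneOn_B (convex_Ici 0) fun t ht => (hlt t ht).le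
  have hlimit : 8 * √6 * decayConstant K = 8 * (decayConstant K * E) / E * √6 := by
    field_simp
  exact ⟨fun t => coeffA E (r t), fun t => coeffA E (-r t), fun t => coeffC K (r t),
    rfl, rfl, rfl, hsol,
    fun t ht => ⟨hB self_mem_Ici ht ht, hlt t ht, hA self_mem_Ici ht ht⟩,
    hsol.monotoneOn_C (convex_Ici 0), hr.tendsto_coeffC_atTop hK,
    hsol.monotoneOn_sub_sq_mul (convex_Ici 0),
    ⟨4 * E ^ 2 * K, by positivity, hr.tendsto_coeffA_sub_sq_mul_coeffC hK.ne'⟩,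
    E, decayConstant K * E, hE, mul_pos (decayConstant_pos hK.ne') hE,
    hr.tendsto_rpow_mul_coeffA_sub hK.ne', hr.tendsto_rpow_mul_coeffA_neg_sub hK.ne',
    hlimit ▸ hr.tendsto_coeffC_div_rpow hK⟩
end
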